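/- arXiv:2006.14379 — 4 statements merged into one kernel-verified Lean document; each statement's English description precedes it below -/
import Mathlib

section
/- Let φ be smooth near 0 with φ(0) = 1/2 and φ′(0) ≠ 0, and set Φ(s, x, δ) = −s x + x² φ(δ x). Then there exist δ₀ > 0 and a compact interval [c₁, c₂] ⊂ (0,∞) and a smooth function q̃(s,δ) on [c₁,c₂] × [0,δ₀] with ∂ₓΦ(s, q̃(s,δ), δ) = 0 for all (s,δ); moreover, writing Φ̃(s,δ) = Φ(s, q̃(s,δ), δ) and s = −ξ₁/(tξ₂) for t ∈ [1,2] and ξ₂ ≠ 0, there exists a smooth function R(u, t, δ), defined and smooth up to δ = 0 on the relevant compact parameter region (in particular bounded together with all its derivatives), such that −t² ξ₂ Φ̃(s, δ) = ξ₁²/(2ξ₂) + δ φ′(0) ξ₁³/(t ξ₂²) + δ² ξ₂ R(ξ₁/ξ₂, t, δ). -/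
open MeasureTheory Set
open scoped ENNReal

/-- The phase `Φ(s, x, δ) = -s x + x² φ(δ x)`. -/
noncomputable def phasePhi (φ : ℝ → ℝ) (s x δ : ℝ) : ℝ := -s * x + x ^ 2 * φ (δ * x)

/-- The critical value `Φ̃(s, δ) = Φ(s, q̃(s,δ), δ)`, where `q̃` is the critical point of
`x ↦ Φ(s, x, δ)`. -/
noncomputable def phasePhiT (φ : ℝ → ℝ) (qc : ℝ → ℝ → ℝ) (s δ : ℝ) : ℝ :=
  phasePhi φ s (qc s δ) δ

/-!
By the homogeneity `Φ(s, s x, δ) = s² Φ(1, x, δ s)`, the critical point and the critical value for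
`(s, δ)` are `s k(w)` and `s² V(w)` with `w = δ s`, where `k` and `V` belong to `s = 1`. In terms of
`y = w x` the critical equation is `y (2 φ(y) + y φ'(y)) = w`, whose left-hand side has derivative
`2 φ(0) ≠ 0` at `y = 0`. The inverse function theorem gives a smooth solution `y = h(w)` with
`h(0) = 0`, and Hadamard's lemma makes `k(w) = h(w) / w` smooth. Since `k(w)` is critical, `V'(0)`
only sees the explicit dependence of the phase on `w`, so `V'(0) = φ'(0) k(0)³`. Expanding `V` to
second order with a smooth remainder at `w = -δ ξ₁ / (t ξ₂)` gives the expansion.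
-/

open Filter Function
open scoped Topology ContDiff Manifold

theorem eventually_forall_mul_of_isCompact {M : Type*} [TopologicalSpace M] [MulZeroClass M]
    [ContinuousMul M] {K : Set M} (hK : IsCompact K) {p : M → Prop} (hp : ∀ᶠ w in 𝓝 0, p w) :
    ∀ᶠ δ in 𝓝 0, ∀ s ∈ K, p (δ * s) :=
  hK.eventually_forall_of_forall_eventually (P := fun δ s => p (δ * s)) fun s _ =>
    (continuous_mul.tendsto' (0, s) 0 (zero_mul s)).eventually hp

section Smooth

variable {E F : Type*} [NormedAddCommGroup E] [NormedSpace ℝ E]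
  [NormedAddCommGroup F] [NormedSpace ℝ F]

theorem exists_contDiff_eventuallyEq_nhdsSet [FiniteDimensional ℝ E] {n : ℕ∞} {f : E → F}
    {s U : Set E} (hs : IsClosed s) (hU : U ∈ 𝓝ˢ s) (hf : ContDiffOn ℝ n f U) :
    ∃ g : E → F, ContDiff ℝ n g ∧ g =ᶠ[𝓝ˢ s] f := by
  have hdisj : Disjoint (interior U)ᶜ s :=
    disjoint_compl_left_iff_subset.2 (subset_interior_iff_mem_nhdsSet.2 hU)
  obtain ⟨χ, hχ_zero, hχ_one, -⟩ := exists_contMDiffMap_zero_one_nhds_of_isClosed 𝓘(ℝ, E) (n := n)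
    isOpen_interior.isClosed_compl hs hdisj
  refine ⟨fun x => χ x • f x, contDiff_iff_contDiffAt.2 fun x => ?_, ?_⟩
  · by_cases hx : x ∈ interior U
    · exact χ.contMDiff.contDiff.contDiffAt.smul
        (hf.contDiffAt (mem_interior_iff_mem_nhds.1 hx))
    · refine contDiffAt_const (c := (0 : F)) |>.congr_of_eventuallyEq ?_
      filter_upwards [hχ_zero.filter_mono (nhds_le_nhdsSet hx)] with y hy
      rw [hy, zero_smul]
  · filter_upwards [hχ_one] with x hx
    rw [hx, one_smul]

theorem hasDerivAt_intervalIntegral_param {f : ℝ → ℝ → E} (hf : ContDiff ℝ 1 (uncurry f))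
    (a b x₀ : ℝ) :
    HasDerivAt (fun x => ∫ t in a..b, f x t)
      (∫ t in a..b, fderiv ℝ (uncurry f) (x₀, t) (1, 0)) x₀ := by
  have hf' : Continuous fun p : ℝ × ℝ => fderiv ℝ (uncurry f) p (1, 0) :=
    (hf.continuous_fderiv one_ne_zero).clm_apply continuous_const
  obtain ⟨C, hC⟩ := ((isCompact_closedBall x₀ 1).prod isCompact_uIcc).exists_bound_of_continuousOn
    (hf'.continuousOn (s := Metric.closedBall x₀ 1 ×ˢ uIcc a b))
  refine (intervalIntegral.hasDerivAt_integral_of_dominated_loc_of_deriv_le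
    (F' := fun x t => fderiv ℝ (uncurry f) (x, t) (1, 0)) (bound := fun _ => C)
    (Metric.closedBall_mem_nhds x₀ one_pos) (.of_forall fun x => ?_) ?_ ?_
    (.of_forall fun t ht x hx => hC (x, t) ⟨hx, uIoc_subset_uIcc ht⟩)
    intervalIntegrable_const (.of_forall fun t _ x _ => ?_)).2
  · exact (hf.continuous.comp (.prodMk_right x)).aestronglyMeasurable
  · exact (hf.continuous.comp (.prodMk_right x₀)).intervalIntegrable a b
  · exact (hf'.comp (.prodMk_right x₀)).aestronglyMeasurable
  · exact ((hf.differentiable one_ne_zero (x, t)).hasFDerivAt).comp_hasDerivAt x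
      ((hasDerivAt_id x).prodMk (hasDerivAt_const x t))

theorem contDiff_intervalIntegral_param {n : ℕ∞} {f : ℝ → ℝ → E}
    (hf : ContDiff ℝ n (uncurry f)) (a b : ℝ) :
    ContDiff ℝ n fun x => ∫ t in a..b, f x t := by
  suffices ∀ (m : ℕ) {f : ℝ → ℝ → E}, ContDiff ℝ m (uncurry f) →
      ContDiff ℝ m fun x => ∫ t in a..b, f x t from
    contDiff_iff_forall_nat_le.2 fun m hm => this m (hf.of_le (mod_cast hm))
  intro m
  induction m with
  | zero =>
    intro f hf
    exact contDiff_zero.2 (intervalIntegral.continuous_parametric_intervalIntegral_of_continuous'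
      hf.continuous a b)
  | succ m ih =>
    intro f hf
    have hderiv := hasDerivAt_intervalIntegral_param
      (hf.of_le (mod_cast Nat.le_add_left 1 m)) a b
    rw [Nat.cast_succ, contDiff_succ_iff_deriv]
    refine ⟨fun x => (hderiv x).differentiableAt, by simp, ?_⟩
    rw [funext fun x => (hderiv x).deriv]
    exact ih ((hf.fderiv_right le_rfl).clm_apply contDiff_const)

theorem dslope_eq_intervalIntegral_deriv [CompleteSpace E] {f : ℝ → E} (hf : ContDiff ℝ 1 f)
    (a x : ℝ) :
    dslope f a x = ∫ t in (0 : ℝ)..1, deriv f (a + t * (x - a)) := by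
  rcases eq_or_ne x a with rfl | hx
  · simp
  · have hftc : (x - a) • ∫ t in (0 : ℝ)..1, deriv f (a + t • (x - a)) = f (a + (x - a)) - f a :=
      intervalIntegral.integral_unitInterval_deriv_eq_sub
        (hf.continuous_deriv_one.comp (by fun_prop)).continuousOn
        fun t _ => (hf.differentiable one_ne_zero _).hasDerivAt
    apply smul_right_injective E (sub_ne_zero.2 hx)
    simpa using hftc.symm

theorem contDiff_dslope [CompleteSpace E] {n : ℕ∞} {f : ℝ → E} (hf : ContDiff ℝ (n + 1) f)
    (a : ℝ) :
    ContDiff ℝ n (dslope f a) := by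
  rw [funext (dslope_eq_intervalIntegral_deriv (hf.of_le le_add_self) a)]
  have hf' : ContDiff ℝ n (deriv f) := (contDiff_succ_iff_deriv.1 hf).2.2
  exact contDiff_intervalIntegral_param (f := fun x t => deriv f (a + t * (x - a)))
    (hf'.comp (by fun_prop)) 0 1

theorem eq_add_smul_deriv_add_sq_smul_dslope_dslope {𝕜 G : Type*} [NontriviallyNormedField 𝕜]
    [NormedAddCommGroup G] [NormedSpace 𝕜 G] (f : 𝕜 → G) (a x : 𝕜) :
    f x = f a + (x - a) • deriv f a + (x - a) ^ 2 • dslope (dslope f a) a x := by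
  rw [sq, mul_smul, sub_smul_dslope, dslope_same, smul_sub, sub_smul_dslope]
  abel

theorem exists_contDiff_eventually_right_inverse {n : ℕ∞} {g : ℝ → ℝ} {a : ℝ}
    (hg : ContDiff ℝ n g) (hn : n ≠ 0) (ha : deriv g a ≠ 0) :
    ∃ h : ℝ → ℝ, ContDiff ℝ n h ∧ h (g a) = a ∧ ∀ᶠ w in 𝓝 (g a), g (h w) = w := by
  have hn' : (n : WithTop ℕ∞) ≠ 0 := mod_cast hn
  have hstrict := (hg.contDiffAt.hasStrictDerivAt (x := a) hn').hasStrictFDerivAt_equiv ha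
  let e := hstrict.toOpenPartialHomeomorph g
  have ha_source : a ∈ e.source := hstrict.mem_toOpenPartialHomeomorph_source
  have hga_target : g a ∈ e.target := e.map_source ha_source
  have hsymm : e.symm (g a) = a := e.left_inv ha_source
  have hregular : ∀ᶠ w in 𝓝 (g a), w ∈ e.target ∧ deriv g (e.symm w) ≠ 0 := by
    refine (e.open_target.eventually_mem hga_target).and ?_
    have hcont : ContinuousAt (fun w => deriv g (e.symm w)) (g a) :=
      (hg.continuous_deriv (mod_cast Order.one_le_iff_ne_zero.2 hn)).continuousAt.comp
        (e.continuousAt_symm hga_target)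
    exact hcont.eventually_ne (by rwa [hsymm])
  have hsmooth : ContDiffOn ℝ n e.symm {w | w ∈ e.target ∧ deriv g (e.symm w) ≠ 0} :=
    fun w hw => (e.contDiffAt_symm_deriv hw.2 hw.1 (hg.differentiable hn' _).hasDerivAt
      hg.contDiffAt).contDiffWithinAt
  obtain ⟨h, hh, hhe⟩ := exists_contDiff_eventuallyEq_nhdsSet isClosed_singleton
    (by rwa [nhdsSet_singleton]) hsmooth
  rw [nhdsSet_singleton] at hhe
  refine ⟨h, hh, hhe.eq_of_nhds.trans hsymm, ?_⟩
  filter_upwards [hhe, hregular] with w hw hw_mem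
  rw [hw]
  exact e.right_inv hw_mem.1

end Smooth

section Phase

theorem phasePhi_mul (φ : ℝ → ℝ) (s x δ : ℝ) :
    phasePhi φ s (s * x) δ = s ^ 2 * phasePhi φ 1 x (δ * s) := by
  simp only [phasePhi, mul_assoc]
  ring

variable {φ : ℝ → ℝ}

theorem hasDerivAt_phasePhi {s x δ : ℝ} (hφ : DifferentiableAt ℝ φ (δ * x)) :
    HasDerivAt (fun x => phasePhi φ s x δ)
      (-s + x * (2 * φ (δ * x) + δ * x * deriv φ (δ * x))) x := by
  have hcomp : HasDerivAt (fun x => φ (δ * x)) (deriv φ (δ * x) * δ) x :=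
    hφ.hasDerivAt.comp x (hasDerivAt_const_mul δ)
  refine ((hasDerivAt_const_mul (-s)).add ((hasDerivAt_pow 2 x).mul hcomp)).congr_deriv ?_
  push_cast
  ring

theorem hasDerivAt_phasePhi_mul {s x δ d : ℝ} (hs : s ≠ 0)
    (h : HasDerivAt (fun x => phasePhi φ 1 x (δ * s)) d x) :
    HasDerivAt (fun x => phasePhi φ s x δ) (s * d) (s * x) := by
  have hscale : (fun x => phasePhi φ s x δ) = fun x => s ^ 2 * phasePhi φ 1 (x / s) (δ * s) := by
    funext x
    rw [← phasePhi_mul, mul_div_cancel₀ x hs]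
  rw [hscale]
  rw [← mul_div_cancel_left₀ x hs] at h
  refine ((h.comp (s * x) ((hasDerivAt_id _).div_const s)).const_mul (s ^ 2)).congr_deriv ?_
  field_simp

theorem exists_contDiff_criticalPoint (hφ : ContDiff ℝ ∞ φ) (hφ0 : φ 0 ≠ 0) :
    ∃ k : ℝ → ℝ, ContDiff ℝ ∞ k ∧
      ∀ᶠ w in 𝓝 0, HasDerivAt (fun x => phasePhi φ 1 x w) 0 (k w) := by
  let P : ℝ → ℝ := fun y => 2 * φ y + y * deriv φ y
  have hP : ContDiff ℝ ∞ P :=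
    (contDiff_const.mul hφ).add (contDiff_id.mul (contDiff_infty_iff_deriv.1 hφ).2)
  have hderiv : HasDerivAt (fun y => y * P y) (2 * φ 0) 0 :=
    ((hasDerivAt_id' 0).mul (hP.differentiable (by simp) 0).hasDerivAt).congr_deriv (by simp [P])
  obtain ⟨h, hh, hh0, hinv⟩ := exists_contDiff_eventually_right_inverse (n := ⊤)
    (g := fun y => y * P y) (by fun_prop) (by simp)
    (hderiv.deriv ▸ mul_ne_zero two_ne_zero hφ0)
  rw [zero_mul] at hh0 hinv
  have hdslope : ∀ w, w * dslope h 0 w = h w := fun w => by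
    simpa using sub_smul_dslope_of_zero hh0 w
  have hk : ContDiff ℝ ∞ (dslope h 0) := contDiff_dslope (n := ⊤) hh 0
  -- The equation holds for `w ≠ 0` after division by `w`, and at `w = 0` by continuity.
  have hcrit : ∀ᶠ w in 𝓝 0, dslope h 0 w * P (h w) = 1 := by
    have hcont : Continuous fun w => dslope h 0 w * P (h w) :=
      hk.continuous.mul (hP.continuous.comp hh.continuous)
    refine (hcont.continuousAt.eventuallyEq_nhds_iff_eventuallyEq_nhdsNE
      continuousAt_const).1 ?_
    filter_upwards [hinv.filter_mono nhdsWithin_le_nhds, self_mem_nhdsWithin] with w hw hw0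
    exact mul_left_cancel₀ hw0 (by rw [← mul_assoc, hdslope, hw, mul_one])
  refine ⟨dslope h 0, hk, hcrit.mono fun w hw => ?_⟩
  refine (hasDerivAt_phasePhi (hφ.differentiable (by simp) _)).congr_deriv ?_
  rw [hdslope]
  linear_combination hw

theorem hasDerivAt_phasePhi_criticalPoint {φ' : ℝ} {k : ℝ → ℝ} (hφ : HasDerivAt φ φ' 0)
    (hk : DifferentiableAt ℝ k 0) (hk0 : 2 * φ 0 * k 0 = 1) :
    HasDerivAt (fun w => phasePhi φ 1 (k w) w) (φ' * k 0 ^ 3) 0 := by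
  have hcomp : HasDerivAt (fun w => φ (w * k w)) (φ' * (1 * k 0 + 0 * deriv k 0)) 0 :=
    HasDerivAt.comp 0 (by rwa [zero_mul]) ((hasDerivAt_id' 0).mul hk.hasDerivAt)
  refine ((hk.hasDerivAt.const_mul (-1)).add
    ((hk.hasDerivAt.pow 2).mul hcomp)).congr_deriv ?_
  simp only [Pi.pow_apply, zero_mul]
  push_cast
  -- The derivative of `k` drops out because `k 0` is a critical point.
  linear_combination deriv k 0 * hk0

theorem exists_contDiff_criticalValue {U : Set ℝ} (hU : U ∈ 𝓝 0) (hφ : ContDiffOn ℝ ∞ φ U)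
    (hφ0 : φ 0 ≠ 0) :
    ∃ k V : ℝ → ℝ, ContDiff ℝ ∞ k ∧ ContDiff ℝ ∞ V ∧
      V 0 = -(4 * φ 0)⁻¹ ∧ deriv V 0 = deriv φ 0 / (2 * φ 0) ^ 3 ∧
      ∀ᶠ w in 𝓝 0, HasDerivAt (fun x => phasePhi φ 1 x w) 0 (k w) ∧
        phasePhi φ 1 (k w) w = V w := by
  obtain ⟨ψ, hψ, hψφ⟩ := exists_contDiff_eventuallyEq_nhdsSet isClosed_singleton
    (by rwa [nhdsSet_singleton]) hφ
  rw [nhdsSet_singleton] at hψφ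
  rw [← hψφ.deriv_eq, ← hψφ.eq_of_nhds]
  rw [← hψφ.eq_of_nhds] at hφ0
  obtain ⟨k, hk, hcrit⟩ := exists_contDiff_criticalPoint hψ hφ0
  have hψ' := hψ.differentiable (by simp)
  have hk0 : 2 * ψ 0 * k 0 = 1 := by
    have hzero := hcrit.self_of_nhds.unique (hasDerivAt_phasePhi (hψ' _))
    simp only [zero_mul, add_zero] at hzero
    linear_combination -hzero
  have hk0' : k 0 = (2 * ψ 0)⁻¹ := eq_inv_of_mul_eq_one_right hk0
  have hgerm : ∀ᶠ w in 𝓝 0, ∀ᶠ x in 𝓝 (k w), phasePhi φ 1 x w = phasePhi ψ 1 x w := by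
    have hlim : Tendsto (fun w => w * k w) (𝓝 0) (𝓝 0) :=
      (continuous_id.mul hk.continuous).tendsto' 0 0 (zero_mul _)
    filter_upwards [hlim.eventually hψφ.eventually_nhds] with w hw
    filter_upwards [(continuous_const_mul w).continuousAt.eventually hw] with x hx
    simp only [phasePhi, hx]
  refine ⟨k, fun w => phasePhi ψ 1 (k w) w, hk, ?_, ?_, ?_, ?_⟩
  · unfold phasePhi
    fun_prop
  · simp only [phasePhi, zero_mul, hk0']
    field_simp
    ring
  · rw [(hasDerivAt_phasePhi_criticalPoint (hψ' 0).hasDerivAt (hk.differentiable (by simp) 0)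
      hk0).deriv, hk0', inv_pow, div_eq_mul_inv]
  · filter_upwards [hcrit, hgerm] with w hw hφψ
    exact ⟨hw.congr_of_eventuallyEq hφψ, hφψ.self_of_nhds⟩

theorem phase_taylor_expansion_general {U : Set ℝ} (hU : U ∈ 𝓝 0)
    (hφ : ContDiffOn ℝ ∞ φ U) (hφ0 : φ 0 ≠ 0) {c₁ : ℝ} (hc₁ : 0 < c₁) (c₂ : ℝ) :
    ∃ δ₀ > 0, ∃ qc : ℝ → ℝ → ℝ, ContDiff ℝ ∞ (fun z : ℝ × ℝ => qc z.1 z.2) ∧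
      (∀ s ∈ Icc c₁ c₂, ∀ δ ∈ Icc 0 δ₀, HasDerivAt (fun x => phasePhi φ s x δ) 0 (qc s δ)) ∧
      ∃ R : ℝ → ℝ → ℝ → ℝ, ContDiff ℝ ∞ (fun z : ℝ × ℝ × ℝ => R z.1 z.2.1 z.2.2) ∧
        ∀ t ∈ Icc (1 : ℝ) 2, ∀ ξ : ℝ × ℝ, ξ.2 ≠ 0 → -ξ.1 / (t * ξ.2) ∈ Icc c₁ c₂ →
          ∀ δ ∈ Icc 0 δ₀,
            -(t ^ 2 * ξ.2 * phasePhiT φ qc (-ξ.1 / (t * ξ.2)) δ) =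
              ξ.1 ^ 2 / (4 * φ 0 * ξ.2) +
                δ * (deriv φ 0 / (2 * φ 0) ^ 3) * (ξ.1 ^ 3 / (t * ξ.2 ^ 2)) +
                δ ^ 2 * ξ.2 * R (ξ.1 / ξ.2) t δ := by
  obtain ⟨k, V, hk, hV, hV0, hV', hcrit⟩ := exists_contDiff_criticalValue hU hφ hφ0
  have hG : ContDiff ℝ ∞ (dslope (dslope V 0) 0) :=
    contDiff_dslope (n := ⊤) (contDiff_dslope (n := ⊤) hV 0) 0
  -- `R` has to be smooth at `t = 0` as well, where `t⁻¹` is not.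
  obtain ⟨v, hv, hv_inv⟩ := exists_contDiff_eventuallyEq_nhdsSet (n := ⊤) (f := fun t : ℝ => t⁻¹)
    (isClosed_Icc (a := 1) (b := 2))
    (isOpen_compl_singleton.mem_nhdsSet.2 fun t ht => (one_pos.trans_le ht.1).ne')
    (contDiffOn_inv ℝ)
  obtain ⟨δ₀, hδ₀, hsmall⟩ : ∃ δ₀ > 0, ∀ δ ∈ Icc 0 δ₀, ∀ s ∈ Icc c₁ c₂,
      HasDerivAt (fun x => phasePhi φ 1 x (δ * s)) 0 (k (δ * s)) ∧
        phasePhi φ 1 (k (δ * s)) (δ * s) = V (δ * s) := by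
    obtain ⟨δ₀, hδ₀, hball⟩ := Metric.nhds_basis_closedBall.eventually_iff.1
      (eventually_forall_mul_of_isCompact isCompact_Icc hcrit)
    exact ⟨δ₀, hδ₀, fun δ hδ => hball (by simpa [abs_of_nonneg hδ.1] using hδ.2)⟩
  refine ⟨δ₀, hδ₀, fun s δ => s * k (δ * s), by fun_prop, fun s hs δ hδ => ?_,
    fun u t δ => -(u ^ 4 * v t ^ 2 * dslope (dslope V 0) 0 (-(δ * u * v t))), by fun_prop,
    fun t ht ξ hξ hs δ hδ => ?_⟩
  · simpa using hasDerivAt_phasePhi_mul (hc₁.trans_le hs.1).ne' (hsmall δ hδ s hs).1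
  · have ht0 : t ≠ 0 := (one_pos.trans_le ht.1).ne'
    have hvt : v t = t⁻¹ := hv_inv.self_of_nhdsSet ht
    have hw : -(δ * (ξ.1 / ξ.2) * v t) = δ * (-ξ.1 / (t * ξ.2)) := by
      rw [hvt]
      field_simp
    have htaylor := eq_add_smul_deriv_add_sq_smul_dslope_dslope V 0 (δ * (-ξ.1 / (t * ξ.2)))
    simp only [sub_zero, smul_eq_mul, hV0, hV'] at htaylor
    beta_reduce
    rw [phasePhiT, phasePhi_mul, (hsmall δ hδ _ hs).2, htaylor, hw, hvt]
    field_simp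
    ring

end Phase

/-- **Taylor expansion of the critical-value phase (2.16).**  Let `φ` be smooth near `0`
with `φ(0) = 1/2` and `φ'(0) ≠ 0`, and set `Φ(s,x,δ) = -sx + x²φ(δx)`.  Then there are
`δ₀ > 0`, a compact interval `[c₁,c₂] ⊆ (0,∞)` and a smooth function `q̃(s,δ)` on
`[c₁,c₂] × [0,δ₀]` with `∂ₓΦ(s, q̃(s,δ), δ) = 0`; moreover, writing `Φ̃(s,δ) = Φ(s,q̃(s,δ),δ)`
and `s = -ξ₁/(tξ₂)`, there is a smooth function `R(u,t,δ)` (smooth up to `δ = 0`, bounded with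
all derivatives on the relevant compact region) such that
`-t²ξ₂Φ̃(s,δ) = ξ₁²/(2ξ₂) + δ φ'(0) ξ₁³/(tξ₂²) + δ² ξ₂ R(ξ₁/ξ₂, t, δ)`
for `t ∈ [1,2]`, `ξ₂ ≠ 0`, `s ∈ [c₁,c₂]` and `δ ∈ [0,δ₀]`. -/
theorem phase_taylor_expansion
    (r : ℝ) (hr : 0 < r) (φ : ℝ → ℝ) (hφ : ContDiffOn ℝ (⊤ : ℕ∞) φ (Set.Ioo (-r) r))
    (hφ0 : φ 0 = 1 / 2) (hφ' : deriv φ 0 ≠ 0) :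
    ∃ δ₀ > 0, ∃ c₁ c₂ : ℝ, 0 < c₁ ∧ c₁ ≤ c₂ ∧ ∃ qc : ℝ → ℝ → ℝ,
      ContDiffOn ℝ (⊤ : ℕ∞) (fun z : ℝ × ℝ => qc z.1 z.2) (Set.Icc c₁ c₂ ×ˢ Set.Icc (0 : ℝ) δ₀) ∧
      (∀ s ∈ Set.Icc c₁ c₂, ∀ δ ∈ Set.Icc (0 : ℝ) δ₀,
        deriv (fun x => phasePhi φ s x δ) (qc s δ) = 0) ∧
      ∃ R : ℝ → ℝ → ℝ → ℝ,
        ContDiff ℝ (⊤ : ℕ∞) (fun z : ℝ × ℝ × ℝ => R z.1 z.2.1 z.2.2) ∧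
        (∀ n : ℕ, ∃ Cn : ℝ, ∀ z ∈ Set.Icc (-(2 * c₂)) (-c₁) ×ˢ
            (Set.Icc (1 : ℝ) 2 ×ˢ Set.Icc (0 : ℝ) δ₀),
          ‖iteratedFDeriv ℝ n (fun w : ℝ × ℝ × ℝ => R w.1 w.2.1 w.2.2) z‖ ≤ Cn) ∧
        (∀ t ∈ Set.Icc (1 : ℝ) 2, ∀ ξ : ℝ × ℝ, ξ.2 ≠ 0 →
          -ξ.1 / (t * ξ.2) ∈ Set.Icc c₁ c₂ →
          ∀ δ ∈ Set.Icc (0 : ℝ) δ₀,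
            -(t ^ 2 * ξ.2 * phasePhiT φ qc (-ξ.1 / (t * ξ.2)) δ) =
              ξ.1 ^ 2 / (2 * ξ.2) + δ * deriv φ 0 * (ξ.1 ^ 3 / (t * ξ.2 ^ 2)) +
                δ ^ 2 * ξ.2 * R (ξ.1 / ξ.2) t δ) := by
  obtain ⟨δ₀, hδ₀, qc, hqc, hcrit, R, hR, hexp⟩ := phase_taylor_expansion_general
    (Ioo_mem_nhds (neg_neg_of_pos hr) hr) hφ (by rw [hφ0]; norm_num) one_pos 2
  refine ⟨δ₀, hδ₀, 1, 2, one_pos, one_le_two, qc, hqc.contDiffOn,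
    fun s hs δ hδ => (hcrit s hs δ hδ).deriv, R, hR, fun n => ?_, fun t ht ξ hξ hs δ hδ => ?_⟩
  · exact (isCompact_Icc.prod (isCompact_Icc.prod isCompact_Icc)).exists_bound_of_continuousOn
      (hR.continuous_iteratedFDeriv (mod_cast le_top)).continuousOn
  · rw [hexp t ht ξ hξ hs δ hδ, hφ0]
    ring
end

section
/- For every l, j, k and every sector piece g_θ^l (with ĝ_θ^l supported in a sector C_θ^l of angular width ≈ 2^{−l} where ξ₁/ξ₂ ≈ 1), the following three estimates hold with constants independent of l, j, k, θ: (i) ‖𝓕_j^k g_θ^l‖_{L²(ℝ³)} ≤ C 2^{−j} ‖ĝ_θ^l‖_{L²(ℝ²)}; (ii) ‖𝓕_j^k g_θ^l‖_{L^∞(ℝ³)} ≤ C 2^{−l} ‖ĝ_θ^l‖_{L^∞(ℝ²)}; (iii) ‖𝓕_j^k g_θ^l‖_{L^∞(ℝ³)} ≤ ‖ĝ_θ^l‖_{L¹(ℝ²)}. -/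
open MeasureTheory Set
open scoped ENNReal

/-- The Euclidean norm of `ξ = (ξ₁, ξ₂) ∈ ℝ²`. -/
noncomputable def nrm (ξ : ℝ × ℝ) : ℝ := Real.sqrt (ξ.1 ^ 2 + ξ.2 ^ 2)

/-- A (nonunitary) Fourier transform on `ℝ²`. -/
noncomputable def fhat (f : ℝ × ℝ → ℂ) (ξ : ℝ × ℝ) : ℂ :=
  ∫ x : ℝ × ℝ, Complex.exp (-Complex.I * Complex.ofReal (ξ.1 * x.1 + ξ.2 * x.2)) * f x

/-- The rescaled Fourier integral operator
`𝓕_j^k g(y,t) = ρ₁(y,t) ∫ e^{i 2^j (ξ·y - t²ξ₂Φ̃(s,δ))} a(2^jξ,t) ρ₀(|ξ|) χ̃(ξ₁/ξ₂) ĝ(ξ) dξ`,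
with `s = -ξ₁/(tξ₂)` and `δ = 2^{-k}`. -/
noncomputable def FIOresc (φ : ℝ → ℝ) (qc : ℝ → ℝ → ℝ) (a : ℝ × ℝ → ℝ → ℂ)
    (ρ₀ : ℝ → ℝ) (ρ₁ : (ℝ × ℝ) × ℝ → ℝ) (χ : ℝ → ℝ) (j k : ℕ)
    (g : ℝ × ℝ → ℂ) (y : ℝ × ℝ) (t : ℝ) : ℂ :=
  Complex.ofReal (ρ₁ (y, t)) * ∫ ξ : ℝ × ℝ,
    Complex.exp (Complex.I * Complex.ofReal ((2 : ℝ) ^ (j : ℝ) *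
        (ξ.1 * y.1 + ξ.2 * y.2 -
          t ^ 2 * ξ.2 * phasePhiT φ qc (-ξ.1 / (t * ξ.2)) ((2 : ℝ) ^ (-(k : ℝ)))))) *
      a ((2 : ℝ) ^ (j : ℝ) * ξ.1, (2 : ℝ) ^ (j : ℝ) * ξ.2) t *
      Complex.ofReal (ρ₀ (nrm ξ)) * Complex.ofReal (χ (ξ.1 / ξ.2)) * fhat g ξ

/-- The angular sector (cone) `{ξ : |ξ₁/ξ₂ - κ| ≤ 2·2^{-l}}` with direction `κ` and
width `2^{-l}`. -/
def sector (κ w : ℝ) : Set (ℝ × ℝ) := {ξ : ℝ × ℝ | |ξ.1 / ξ.2 - κ| ≤ 2 * w}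

/-!
For fixed `t` the factor `e^{-iλt²ξ₂Φ̃}` is unimodular and independent of `y`, so it can be absorbed
into the amplitude: the operator is then the Fourier transform, at frequency scale `λ = 2^j`, of a
bounded multiple of `ĝ`. Plancherel in `y` gives `λ⁻¹` in dimension two, and integrating over the
compact range of `t` gives (i). For (ii) and (iii) the oscillatory integral is bounded by the `L¹`
norm of its integrand, which lives on a truncated sector of area `O(2^{-l})`.
-/

section Plancherel

open scoped FourierTransform SchwartzMap

variable {V : Type*} [NormedAddCommGroup V] [InnerProductSpace ℝ V] [FiniteDimensional ℝ V]
  [MeasurableSpace V] [BorelSpace V]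

theorem integral_fourier_smul_eq {E : Type*} [NormedAddCommGroup E] [NormedSpace ℂ E]
    [CompleteSpace E] {ψ : V → ℂ} {f : V → E} (hψ : Integrable ψ) (hf : Integrable f) :
    ∫ v, 𝓕 ψ v • f v = ∫ v, ψ v • 𝓕 f v := by
  have h := VectorFourier.integral_fourierIntegral_smul_eq_flip (L := innerₗ V)
    Real.continuous_fourierChar continuous_inner hψ hf
  rwa [flip_innerₗ] at h

variable {F : Type*} [NormedAddCommGroup F] [InnerProductSpace ℂ F] [CompleteSpace F]

theorem coeFn_fourier_toLp_ae_eq {f : V → F} (hf : Integrable f) (hf₂ : MemLp f 2) :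
    (𝓕 (hf₂.toLp f) : Lp F 2 (volume : Measure V)) =ᵐ[volume] 𝓕 f := by
  have hcont : Continuous (𝓕 f) :=
    VectorFourier.fourierIntegral_continuous Real.continuous_fourierChar continuous_inner hf
  -- both sides define the same tempered distribution
  refine ae_eq_of_integral_contDiff_smul_eq ((Lp.memLp _).locallyIntegrable (by norm_num))
    hcont.locallyIntegrable fun g hg hgc => ?_
  let ψ : 𝓢(V, ℂ) := (hgc.comp_left (g := Complex.ofRealCLM) rfl).toSchwartzMap (by fun_prop)
  have weak := congrArg (fun T => T ψ) (Lp.fourier_toTemperedDistribution_eq (hf₂.toLp f))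
  simp only [TemperedDistribution.fourier_apply, Lp.toTemperedDistribution_apply] at weak
  calc ∫ v, g v • (𝓕 (hf₂.toLp f) : Lp F 2 (volume : Measure V)) v
      = ∫ v, ψ v • (𝓕 (hf₂.toLp f) : Lp F 2 (volume : Measure V)) v := by simp [ψ]
    _ = ∫ v, 𝓕 ψ v • hf₂.toLp f v := weak.symm
    _ = ∫ v, 𝓕 ψ v • f v :=
        integral_congr_ae (hf₂.coeFn_toLp.mono fun v hv => by simp only [hv])
    _ = ∫ v, ψ v • 𝓕 f v := by
        rw [SchwartzMap.fourier_coe, integral_fourier_smul_eq ψ.integrable hf]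
    _ = ∫ v, g v • 𝓕 f v := by simp [ψ]

theorem eLpNorm_fourier_eq {f : V → F} (hf : Integrable f) (hf₂ : MemLp f 2) :
    eLpNorm (𝓕 f) 2 volume = eLpNorm f 2 volume := by
  have h := Lp.norm_fourier_eq (hf₂.toLp f)
  rwa [Lp.norm_def, Lp.norm_def, ENNReal.toReal_eq_toReal_iff' (Lp.eLpNorm_ne_top _)
    (Lp.eLpNorm_ne_top _), eLpNorm_congr_ae (coeFn_fourier_toLp_ae_eq hf hf₂),
    eLpNorm_congr_ae hf₂.coeFn_toLp] at h

theorem eLpNorm_fourier_le (f : V → F) : eLpNorm (𝓕 f) 2 volume ≤ eLpNorm f 2 volume := by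
  by_cases hf : Integrable f
  · by_cases hf₂ : MemLp f 2
    · exact (eLpNorm_fourier_eq hf hf₂).le
    · simp [not_lt_top_iff.mp fun h => hf₂ ⟨hf.1, h⟩]
  · -- the Fourier integral of a non-integrable function is `0` by convention
    have : 𝓕 f = 0 := funext fun w =>
      integral_undef (mt (Real.fourierIntegral_convergent_iff w).mp hf)
    simp [this]

end Plancherel

theorem eLpNorm_comp_smul {V E : Type*} [NormedAddCommGroup V] [NormedSpace ℝ V]
    [FiniteDimensional ℝ V] [MeasurableSpace V] [BorelSpace V] [NormedAddCommGroup E]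
    (μ : Measure V) [μ.IsAddHaarMeasure] (f : V → E) (p : ℝ≥0∞) {c : ℝ} (hc : c ≠ 0) :
    eLpNorm (fun v => f (c • v)) p μ =
      ENNReal.ofReal |(c ^ Module.finrank ℝ V)⁻¹| ^ (1 / p).toReal * eLpNorm f p μ := by
  have hpos : ENNReal.ofReal |(c ^ Module.finrank ℝ V)⁻¹| ≠ 0 := by
    simp [hc]
  rw [← smul_eq_mul, ← eLpNorm_smul_measure_of_ne_zero hpos, ← Measure.map_addHaar_smul μ hc,
    (measurableEmbedding_const_smul₀ hc).eLpNorm_map_measure]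
  rfl

/-- The oscillatory integral `∫ e^{iλ ξ·y} h(ξ) dξ` over `ℝ²`, i.e. the Fourier transform of `h` at
`-λy/(2π)`. It is written in coordinates because `ℝ × ℝ` carries the sup norm, hence no inner
product. -/
noncomputable def oscIntegral (lam : ℝ) (h : ℝ × ℝ → ℂ) (y : ℝ × ℝ) : ℂ :=
  ∫ ξ : ℝ × ℝ,
    Complex.exp (Complex.I * Complex.ofReal (lam * (ξ.1 * y.1 + ξ.2 * y.2))) * h ξ

theorem enorm_oscIntegral_le (lam : ℝ) (h : ℝ × ℝ → ℂ) (y : ℝ × ℝ) :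
    ‖oscIntegral lam h y‖ₑ ≤ eLpNorm h 1 volume := by
  rw [eLpNorm_one_eq_lintegral_enorm]
  refine (enorm_integral_le_lintegral_enorm _).trans_eq (lintegral_congr fun ξ => ?_)
  rw [enorm_mul, mul_comm Complex.I, ← ofReal_norm, Complex.norm_exp_ofReal_mul_I,
    ENNReal.ofReal_one, one_mul]

open scoped FourierTransform in
theorem oscIntegral_ofLp (lam : ℝ) (h : ℝ × ℝ → ℂ) (v : WithLp 2 (ℝ × ℝ)) :
    oscIntegral lam h v.ofLp =
      𝓕 (fun u : WithLp 2 (ℝ × ℝ) => h u.ofLp) (-(lam / (2 * Real.pi)) • v) := by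
  rw [Real.fourier_eq', oscIntegral, ← (WithLp.volume_preserving_ofLp ℝ ℝ).integral_comp
    (MeasurableEquiv.toLp 2 (ℝ × ℝ)).symm.measurableEmbedding]
  refine integral_congr_ae (.of_forall fun u => ?_)
  have phase : -2 * Real.pi * inner ℝ u (-(lam / (2 * Real.pi)) • v) =
      lam * (u.ofLp.1 * v.ofLp.1 + u.ofLp.2 * v.ofLp.2) := by
    simp only [inner_smul_right, WithLp.prod_inner_apply, Real.inner_apply]
    field_simp [Real.pi_ne_zero]
  simp only [phase, mul_comm Complex.I, smul_eq_mul]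

theorem eLpNorm_oscIntegral_le {lam : ℝ} (hlam : 0 < lam) (h : ℝ × ℝ → ℂ) :
    eLpNorm (oscIntegral lam h) 2 volume ≤
      ENNReal.ofReal (2 * Real.pi / lam) * eLpNorm h 2 volume := by
  have hofLp : MeasurableEmbedding (WithLp.ofLp : WithLp 2 (ℝ × ℝ) → ℝ × ℝ) :=
    (MeasurableEquiv.toLp 2 (ℝ × ℝ)).symm.measurableEmbedding
  have transfer (f : ℝ × ℝ → ℂ) :
      eLpNorm f 2 volume = eLpNorm (fun v : WithLp 2 (ℝ × ℝ) => f v.ofLp) 2 volume := by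
    rw [← (WithLp.volume_preserving_ofLp ℝ ℝ).map_eq, hofLp.eLpNorm_map_measure]
    rfl
  have scale : ENNReal.ofReal |((-(lam / (2 * Real.pi))) ^ 2)⁻¹| ^ (1 / 2 : ℝ≥0∞).toReal =
      ENNReal.ofReal (2 * Real.pi / lam) := by
    rw [neg_sq, ← inv_pow, inv_div, abs_of_nonneg (by positivity),
      ENNReal.ofReal_pow (by positivity), ← ENNReal.rpow_natCast, ← ENNReal.rpow_mul]
    norm_num
  have hc : -(lam / (2 * Real.pi)) ≠ 0 := neg_ne_zero.mpr (by positivity)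
  have hdim : Module.finrank ℝ (WithLp 2 (ℝ × ℝ)) = 2 := by
    rw [(WithLp.linearEquiv 2 ℝ (ℝ × ℝ)).finrank_eq]
    simp
  rw [transfer, transfer h]
  simp only [oscIntegral_ofLp]
  rw [eLpNorm_comp_smul _ _ _ hc, hdim, scale]
  gcongr
  exact eLpNorm_fourier_le _

theorem eLpNorm_prod_le_of_forall_eLpNorm_le {α β E : Type*} [MeasurableSpace α]
    [MeasurableSpace β] [NormedAddCommGroup E] {μ : Measure α} {ν : Measure β} [SFinite μ]
    [SFinite ν] {p : ℝ≥0∞} (hp₀ : p ≠ 0) (hp : p ≠ ∞) {F : α × β → E} {S : Set β} {D : ℝ≥0∞}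
    (hF : Function.support F ⊆ Prod.snd ⁻¹' S)
    (hD : ∀ t ∈ S, eLpNorm (fun y => F (y, t)) p μ ≤ D) :
    eLpNorm F p (μ.prod ν) ≤ D * ν S ^ (1 / p.toReal) := by
  have hp' : 0 < p.toReal := ENNReal.toReal_pos hp₀ hp
  have slice (t : β) : ∫⁻ y, ‖F (y, t)‖ₑ ^ p.toReal ∂μ ≤ S.indicator (fun _ => D ^ p.toReal) t := by
    by_cases ht : t ∈ S
    · rw [indicator_of_mem ht, ← ENNReal.rpow_inv_le_iff hp', ← one_div,
        ← eLpNorm_eq_lintegral_rpow_enorm_toReal hp₀ hp]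
      exact hD t ht
    · have hzero (y : α) : F (y, t) = 0 := Function.notMem_support.mp fun h => ht (hF h)
      simp [hzero, hp']
  calc eLpNorm F p (μ.prod ν)
      = (∫⁻ z, ‖F z.swap‖ₑ ^ p.toReal ∂ν.prod μ) ^ (1 / p.toReal) := by
        rw [eLpNorm_eq_lintegral_rpow_enorm_toReal hp₀ hp,
          lintegral_prod_swap (f := fun z => ‖F z‖ₑ ^ p.toReal)]
    _ ≤ (∫⁻ t, S.indicator (fun _ => D ^ p.toReal) t ∂ν) ^ (1 / p.toReal) := by
        gcongr
        exact (lintegral_prod_le _).trans (lintegral_mono slice)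
    _ ≤ (D ^ p.toReal * ν S) ^ (1 / p.toReal) := by
        gcongr
        exact lintegral_indicator_const_le S _
    _ = D * ν S ^ (1 / p.toReal) := by
        rw [ENNReal.mul_rpow_of_nonneg _ _ (by positivity), ← ENNReal.rpow_mul,
          mul_one_div_cancel hp'.ne', ENNReal.rpow_one]

theorem eLpNorm_one_le_of_support_subset {α E : Type*} [MeasurableSpace α] [NormedAddCommGroup E]
    {μ : Measure α} {f : α → E} {s : Set α} (hf : Function.support f ⊆ s) :
    eLpNorm f 1 μ ≤ eLpNorm f ∞ μ * μ s := by
  rw [← eLpNorm_restrict_eq_of_support_subset hf, eLpNorm_one_eq_lintegral_enorm,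
    ← setLIntegral_const, eLpNorm_exponent_top]
  exact lintegral_mono_ae (ae_restrict_of_ae (enorm_ae_le_eLpNormEssSup f μ))

theorem abs_snd_le_nrm (ξ : ℝ × ℝ) : |ξ.2| ≤ nrm ξ :=
  Real.abs_le_sqrt (le_add_of_nonneg_left (sq_nonneg ξ.1))

theorem measurableSet_sector (κ w : ℝ) : MeasurableSet (sector κ w) :=
  measurableSet_le (by fun_prop) measurable_const

theorem volume_sector_slice_le {κ w R y : ℝ} (hw : 0 ≤ w) (hy : y ≠ 0) (hyR : |y| ≤ R) :
    volume {x : ℝ | (x, y) ∈ sector κ w} ≤ ENNReal.ofReal (4 * w * R) := by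
  have hsub : {x : ℝ | (x, y) ∈ sector κ w} ⊆ Metric.closedBall (κ * y) (2 * w * R) := by
    intro x (hx : |x / y - κ| ≤ 2 * w)
    have hfac : x - κ * y = (x / y - κ) * y := by field_simp
    rw [Metric.mem_closedBall, Real.dist_eq, hfac, abs_mul]
    gcongr
  refine (measure_mono hsub).trans_eq ?_
  rw [Real.volume_closedBall]
  ring_nf

theorem volume_sector_inter_strip_le {κ w R : ℝ} (hw : 0 ≤ w) (hR : 0 ≤ R) :
    volume (sector κ w ∩ {ξ | |ξ.2| ≤ R}) ≤ ENNReal.ofReal (8 * R ^ 2 * w) := by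
  have hmeas : MeasurableSet (sector κ w ∩ {ξ | |ξ.2| ≤ R}) :=
    (measurableSet_sector κ w).inter (measurableSet_le (by fun_prop) measurable_const)
  have slice (y : ℝ) (hy : y ≠ 0) :
      volume ((fun x => (x, y)) ⁻¹' (sector κ w ∩ {ξ | |ξ.2| ≤ R})) ≤
        (Icc (-R) R).indicator (fun _ => ENNReal.ofReal (4 * w * R)) y := by
    by_cases hyR : |y| ≤ R
    · rw [indicator_of_mem (mem_Icc.mpr (abs_le.mp hyR))]
      exact (measure_mono fun x hx => hx.1).trans (volume_sector_slice_le hw hy hyR)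
    · simp [preimage_inter, hyR]
  rw [Measure.volume_eq_prod, Measure.prod_apply_symm hmeas]
  calc _ ≤ ∫⁻ y, (Icc (-R) R).indicator (fun _ => ENNReal.ofReal (4 * w * R)) y :=
        lintegral_mono_ae ((Measure.ae_ne volume 0).mono slice)
    _ ≤ ENNReal.ofReal (4 * w * R) * volume (Icc (-R) R) := lintegral_indicator_const_le _ _
    _ = ENNReal.ofReal (8 * R ^ 2 * w) := by
        rw [Real.volume_Icc, ← ENNReal.ofReal_mul (by positivity)]
        ring_nf

section CutoffOscIntegral

variable {ρ : (ℝ × ℝ) × ℝ → ℝ} {M lam : ℝ} {S : Set ℝ} {h : ℝ → ℝ × ℝ → ℂ} {D : ℝ≥0∞}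

theorem eLpNorm_two_cutoff_mul_oscIntegral_le (hM : ∀ z, ‖ρ z‖ ≤ M)
    (hρ : Function.support ρ ⊆ Prod.snd ⁻¹' S) (hlam : 0 < lam)
    (hD : ∀ t ∈ S, eLpNorm (h t) 2 volume ≤ D) :
    eLpNorm (fun z => (ρ z : ℂ) * oscIntegral lam (h z.2) z.1) 2 volume ≤
      ENNReal.ofReal (M * (2 * Real.pi / lam)) * D * volume S ^ (1 / 2 : ℝ) := by
  have hM₀ : 0 ≤ M := (norm_nonneg _).trans (hM 0)
  have slice (t : ℝ) (ht : t ∈ S) :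
      eLpNorm (fun y => (ρ (y, t) : ℂ) * oscIntegral lam (h t) y) 2 volume ≤
        ENNReal.ofReal (M * (2 * Real.pi / lam)) * D := by
    calc _ ≤ ENNReal.ofReal M * eLpNorm (oscIntegral lam (h t)) 2 volume := by
          refine eLpNorm_le_mul_eLpNorm_of_ae_le_mul (.of_forall fun y => ?_) 2
          rw [norm_mul, Complex.norm_real]
          gcongr
          exact hM _
      _ ≤ ENNReal.ofReal M * (ENNReal.ofReal (2 * Real.pi / lam) * D) := by
          gcongr
          exact (eLpNorm_oscIntegral_le hlam _).trans (by gcongr; exact hD t ht)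
      _ = _ := by rw [← mul_assoc, ← ENNReal.ofReal_mul hM₀]
  have hsupp : Function.support (fun z => (ρ z : ℂ) * oscIntegral lam (h z.2) z.1) ⊆
      Prod.snd ⁻¹' S := fun z hz => hρ (Complex.ofReal_ne_zero.mp (left_ne_zero_of_mul hz))
  exact eLpNorm_prod_le_of_forall_eLpNorm_le two_ne_zero ENNReal.ofNat_ne_top hsupp slice

theorem eLpNorm_top_cutoff_mul_oscIntegral_le (hM : ∀ z, ‖ρ z‖ ≤ M)
    (hρ : Function.support ρ ⊆ Prod.snd ⁻¹' S)
    (hD : ∀ t ∈ S, eLpNorm (h t) 1 volume ≤ D) :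
    eLpNorm (fun z => (ρ z : ℂ) * oscIntegral lam (h z.2) z.1) ∞ volume ≤
      ENNReal.ofReal M * D := by
  refine eLpNormEssSup_le_of_ae_enorm_bound (.of_forall fun z => ?_)
  by_cases hz : ρ z = 0
  · simp [hz]
  · rw [enorm_mul, ← ofReal_norm, Complex.norm_real]
    gcongr
    · exact hM z
    · exact (enorm_oscIntegral_le _ _ _).trans (hD _ (hρ hz))

end CutoffOscIntegral

/-- The operator `FIOresc` with an arbitrary real phase `Ψ(ξ, t)` in place of `t²ξ₂Φ̃(s, δ)`, an
arbitrary frequency scale `lam` in place of `2^j`, and an arbitrary function `f` in place of `ĝ`. -/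
noncomputable def phaseFIO (Ψ : ℝ × ℝ → ℝ → ℝ) (a : ℝ × ℝ → ℝ → ℂ) (ρ₀ : ℝ → ℝ)
    (ρ₁ : (ℝ × ℝ) × ℝ → ℝ) (χ : ℝ → ℝ) (lam : ℝ) (f : ℝ × ℝ → ℂ) (y : ℝ × ℝ) (t : ℝ) : ℂ :=
  Complex.ofReal (ρ₁ (y, t)) * ∫ ξ : ℝ × ℝ,
    Complex.exp (Complex.I * Complex.ofReal (lam * (ξ.1 * y.1 + ξ.2 * y.2 - Ψ ξ t))) *
      a (lam * ξ.1, lam * ξ.2) t *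
      Complex.ofReal (ρ₀ (nrm ξ)) * Complex.ofReal (χ (ξ.1 / ξ.2)) * f ξ

/-- The factor of the integrand of `phaseFIO` independent of `y` and `f`. It absorbs the
phase `Ψ`, which has modulus one after exponentiation. -/
noncomputable def phaseAmplitude (Ψ : ℝ × ℝ → ℝ → ℝ) (a : ℝ × ℝ → ℝ → ℂ) (ρ₀ χ : ℝ → ℝ)
    (lam t : ℝ) (ξ : ℝ × ℝ) : ℂ :=
  Complex.exp (Complex.I * Complex.ofReal (-(lam * Ψ ξ t))) * a (lam * ξ.1, lam * ξ.2) t *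
    Complex.ofReal (ρ₀ (nrm ξ)) * Complex.ofReal (χ (ξ.1 / ξ.2))

section PhaseFIO

variable {Ψ : ℝ × ℝ → ℝ → ℝ} {a : ℝ × ℝ → ℝ → ℂ} {ρ₀ χ : ℝ → ℝ} {ρ₁ : (ℝ × ℝ) × ℝ → ℝ}
  {f : ℝ × ℝ → ℂ} {S : Set ℝ} {lam t κ w A B P X M R : ℝ}

theorem phaseFIO_eq_mul_oscIntegral (y : ℝ × ℝ) :
    phaseFIO Ψ a ρ₀ ρ₁ χ lam f y t =
      ρ₁ (y, t) * oscIntegral lam (fun ξ => phaseAmplitude Ψ a ρ₀ χ lam t ξ * f ξ) y := by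
  have phase (ξ : ℝ × ℝ) : lam * (ξ.1 * y.1 + ξ.2 * y.2 - Ψ ξ t) =
      lam * (ξ.1 * y.1 + ξ.2 * y.2) + -(lam * Ψ ξ t) := by ring
  simp only [phaseFIO, oscIntegral, phaseAmplitude, phase, Complex.ofReal_add, mul_add,
    Complex.exp_add, mul_assoc]

theorem norm_phaseAmplitude_le (ha : ∀ ξ, ‖a ξ t‖ ≤ A) (hρ₀ : ∀ u, ‖ρ₀ u‖ ≤ P)
    (hχ : ∀ s, ‖χ s‖ ≤ X) (ξ : ℝ × ℝ) : ‖phaseAmplitude Ψ a ρ₀ χ lam t ξ‖ ≤ A * P * X := by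
  have hA : 0 ≤ A := (norm_nonneg _).trans (ha 0)
  have hP : 0 ≤ P := (norm_nonneg _).trans (hρ₀ 0)
  rw [phaseAmplitude, norm_mul, norm_mul, norm_mul, mul_comm Complex.I,
    Complex.norm_exp_ofReal_mul_I, one_mul, Complex.norm_real, Complex.norm_real]
  gcongr
  exacts [ha _, hρ₀ _, hχ _]

theorem support_phaseAmplitude_subset (hρ₀ : ∀ u ∈ Function.support ρ₀, ‖u‖ ≤ R) :
    Function.support (phaseAmplitude Ψ a ρ₀ χ lam t) ⊆ {ξ | |ξ.2| ≤ R} := fun ξ hξ =>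
  have hne : ρ₀ (nrm ξ) ≠ 0 :=
    Complex.ofReal_ne_zero.mp (right_ne_zero_of_mul (left_ne_zero_of_mul hξ))
  (abs_snd_le_nrm ξ).trans ((le_abs_self _).trans (hρ₀ _ hne))

theorem eLpNorm_phaseAmplitude_mul_le (hB : ∀ ξ, ‖phaseAmplitude Ψ a ρ₀ χ lam t ξ‖ ≤ B)
    (p : ℝ≥0∞) :
    eLpNorm (fun ξ => phaseAmplitude Ψ a ρ₀ χ lam t ξ * f ξ) p volume ≤
      ENNReal.ofReal B * eLpNorm f p volume := by
  refine eLpNorm_le_mul_eLpNorm_of_ae_le_mul (.of_forall fun ξ => ?_) p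
  rw [norm_mul]
  gcongr
  exact hB ξ

theorem eLpNorm_two_phaseFIO_le (hlam : 0 < lam) (hM : ∀ z, ‖ρ₁ z‖ ≤ M)
    (hρ₁ : Function.support ρ₁ ⊆ Prod.snd ⁻¹' S)
    (hB : ∀ t ∈ S, ∀ ξ, ‖phaseAmplitude Ψ a ρ₀ χ lam t ξ‖ ≤ B) :
    eLpNorm (fun z : (ℝ × ℝ) × ℝ => phaseFIO Ψ a ρ₀ ρ₁ χ lam f z.1 z.2) 2 volume ≤
      ENNReal.ofReal (2 * Real.pi * M * B * lam⁻¹) * volume S ^ (1 / 2 : ℝ) *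
        eLpNorm f 2 volume := by
  have hM₀ : 0 ≤ M := (norm_nonneg _).trans (hM 0)
  simp only [phaseFIO_eq_mul_oscIntegral]
  refine (eLpNorm_two_cutoff_mul_oscIntegral_le hM hρ₁ hlam fun t ht =>
    eLpNorm_phaseAmplitude_mul_le (hB t ht) 2).trans_eq ?_
  rw [← mul_assoc, ← ENNReal.ofReal_mul (by positivity), mul_right_comm]
  ring_nf

theorem eLpNorm_top_phaseFIO_le_eLpNorm_one (hM : ∀ z, ‖ρ₁ z‖ ≤ M)
    (hρ₁ : Function.support ρ₁ ⊆ Prod.snd ⁻¹' S)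
    (hB : ∀ t ∈ S, ∀ ξ, ‖phaseAmplitude Ψ a ρ₀ χ lam t ξ‖ ≤ B) :
    eLpNorm (fun z : (ℝ × ℝ) × ℝ => phaseFIO Ψ a ρ₀ ρ₁ χ lam f z.1 z.2) ∞ volume ≤
      ENNReal.ofReal (M * B) * eLpNorm f 1 volume := by
  simp only [phaseFIO_eq_mul_oscIntegral]
  refine (eLpNorm_top_cutoff_mul_oscIntegral_le hM hρ₁ fun t ht =>
    eLpNorm_phaseAmplitude_mul_le (hB t ht) 1).trans_eq ?_
  rw [← mul_assoc, ← ENNReal.ofReal_mul ((norm_nonneg _).trans (hM 0))]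

theorem eLpNorm_top_phaseFIO_le_eLpNorm_top (hM : ∀ z, ‖ρ₁ z‖ ≤ M)
    (hρ₁ : Function.support ρ₁ ⊆ Prod.snd ⁻¹' S)
    (hB : ∀ t ∈ S, ∀ ξ, ‖phaseAmplitude Ψ a ρ₀ χ lam t ξ‖ ≤ B)
    (hρ₀ : ∀ u ∈ Function.support ρ₀, ‖u‖ ≤ R) (hR : 0 ≤ R) (hw : 0 ≤ w)
    (hf : Function.support f ⊆ sector κ w) :
    eLpNorm (fun z : (ℝ × ℝ) × ℝ => phaseFIO Ψ a ρ₀ ρ₁ χ lam f z.1 z.2) ∞ volume ≤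
      ENNReal.ofReal (8 * R ^ 2 * M * B * w) * eLpNorm f ∞ volume := by
  have hM₀ : 0 ≤ M := (norm_nonneg _).trans (hM 0)
  have hL1 (t : ℝ) (ht : t ∈ S) :
      eLpNorm (fun ξ => phaseAmplitude Ψ a ρ₀ χ lam t ξ * f ξ) 1 volume ≤
        ENNReal.ofReal B * eLpNorm f ∞ volume * ENNReal.ofReal (8 * R ^ 2 * w) := by
    have hsupp : Function.support (fun ξ => phaseAmplitude Ψ a ρ₀ χ lam t ξ * f ξ) ⊆
        sector κ w ∩ {ξ | |ξ.2| ≤ R} := fun ξ hξ =>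
      ⟨hf (right_ne_zero_of_mul hξ), support_phaseAmplitude_subset hρ₀ (left_ne_zero_of_mul hξ)⟩
    refine (eLpNorm_one_le_of_support_subset hsupp).trans ?_
    gcongr
    · exact eLpNorm_phaseAmplitude_mul_le (hB t ht) ∞
    · exact volume_sector_inter_strip_le hw hR
  simp only [phaseFIO_eq_mul_oscIntegral]
  refine (eLpNorm_top_cutoff_mul_oscIntegral_le hM hρ₁ hL1).trans_eq ?_
  rw [mul_right_comm (ENNReal.ofReal B), ← mul_assoc, ← ENNReal.ofReal_mul' (by positivity),
    ← ENNReal.ofReal_mul hM₀]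
  ring_nf

end PhaseFIO

theorem basic_estimates_sector_general {T : Set ℝ} {a : ℝ × ℝ → ℝ → ℂ} {A : ℝ}
    (ha : ∀ t ∈ T, ∀ ξ, ‖a ξ t‖ ≤ A) {χ : ℝ → ℝ} {X : ℝ} (hχ : ∀ s, ‖χ s‖ ≤ X)
    {ρ₀ : ℝ → ℝ} (hρ₀ : Continuous ρ₀) (hρ₀c : HasCompactSupport ρ₀)
    {ρ₁ : (ℝ × ℝ) × ℝ → ℝ} (hρ₁ : Continuous ρ₁) (hρ₁c : HasCompactSupport ρ₁)
    (hρ₁s : tsupport ρ₁ ⊆ {z | z.2 ∈ T}) :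
    ∃ C > 0, ∀ (Ψ : ℝ × ℝ → ℝ → ℝ) (lam w κ : ℝ) (f : ℝ × ℝ → ℂ), 0 < lam → 0 ≤ w →
      Function.support f ⊆ sector κ w →
        eLpNorm (fun z : (ℝ × ℝ) × ℝ => phaseFIO Ψ a ρ₀ ρ₁ χ lam f z.1 z.2) 2 volume ≤
          ENNReal.ofReal (C * lam⁻¹) * eLpNorm f 2 volume ∧
        eLpNorm (fun z : (ℝ × ℝ) × ℝ => phaseFIO Ψ a ρ₀ ρ₁ χ lam f z.1 z.2) ∞ volume ≤
          ENNReal.ofReal (C * w) * eLpNorm f ∞ volume ∧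
        eLpNorm (fun z : (ℝ × ℝ) × ℝ => phaseFIO Ψ a ρ₀ ρ₁ χ lam f z.1 z.2) ∞ volume ≤
          ENNReal.ofReal C * eLpNorm f 1 volume := by
  obtain ⟨M, hM⟩ := hρ₁c.exists_bound_of_continuous hρ₁
  obtain ⟨P, hP⟩ := hρ₀c.exists_bound_of_continuous hρ₀
  obtain ⟨R, hR₀, hR⟩ := hρ₀c.isCompact.isBounded.exists_pos_norm_le
  let S : Set ℝ := Prod.snd '' tsupport ρ₁
  have hρ₁S : Function.support ρ₁ ⊆ Prod.snd ⁻¹' S := fun z hz => ⟨z, subset_tsupport _ hz, rfl⟩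
  have hSfin : volume S ^ (1 / 2 : ℝ) ≠ ∞ :=
    ENNReal.rpow_ne_top_of_nonneg (by norm_num) (hρ₁c.isCompact.image continuous_snd).measure_ne_top
  let V : ℝ := (volume S ^ (1 / 2 : ℝ)).toReal
  let B : ℝ := A * P * X
  have hB (Ψ : ℝ × ℝ → ℝ → ℝ) (lam : ℝ) : ∀ t ∈ S, ∀ ξ, ‖phaseAmplitude Ψ a ρ₀ χ lam t ξ‖ ≤ B := by
    rintro t ⟨z, hz, rfl⟩
    exact norm_phaseAmplitude_le (ha z.2 (hρ₁s hz)) hP hχ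
  refine ⟨max 1 (max (2 * Real.pi * M * B * V) (max (8 * R ^ 2 * M * B) (M * B))), by positivity,
    fun Ψ lam w κ f hlam hw hf => ⟨?_, ?_, ?_⟩⟩
  · refine (eLpNorm_two_phaseFIO_le hlam hM hρ₁S (hB Ψ lam)).trans ?_
    rw [← ENNReal.ofReal_toReal hSfin, ← ENNReal.ofReal_mul' ENNReal.toReal_nonneg, mul_right_comm]
    gcongr
    exact le_max_of_le_right (le_max_left _ _)
  · refine (eLpNorm_top_phaseFIO_le_eLpNorm_top hM hρ₁S (hB Ψ lam)
      (fun u hu => hR u (subset_tsupport _ hu)) hR₀.le hw hf).trans ?_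
    gcongr
    exact le_max_of_le_right (le_max_of_le_right (le_max_left _ _))
  · refine (eLpNorm_top_phaseFIO_le_eLpNorm_one hM hρ₁S (hB Ψ lam)).trans ?_
    gcongr
    exact le_max_of_le_right (le_max_of_le_right (le_max_right _ _))

/-- **Basic estimates (3.7)–(3.9).**  For every `l, j, k` and every sector piece `g_θ^l`
(i.e. a function whose Fourier transform is supported in a sector of angular width
`≈ 2^{-l}` on which `ξ₁/ξ₂ ≈ 1`), one has
(i) `‖𝓕_j^k g_θ^l‖_{L²(ℝ³)} ≤ C 2^{-j} ‖ĝ_θ^l‖_{L²(ℝ²)}`,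
(ii) `‖𝓕_j^k g_θ^l‖_{L^∞(ℝ³)} ≤ C 2^{-l} ‖ĝ_θ^l‖_{L^∞(ℝ²)}`,
(iii) `‖𝓕_j^k g_θ^l‖_{L^∞(ℝ³)} ≤ C ‖ĝ_θ^l‖_{L¹(ℝ²)}`,
with constants independent of `l, j, k, θ`. -/
theorem basic_estimates_sector
    (r : ℝ) (hr : 0 < r) (φ : ℝ → ℝ) (hφ : ContDiffOn ℝ (⊤ : ℕ∞) φ (Set.Ioo (-r) r))
    (hφ0 : φ 0 = 1 / 2) (hφ' : deriv φ 0 ≠ 0)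
    (c₁ c₂ : ℝ) (hc₁ : 0 < c₁) (hc₁₂ : c₁ ≤ c₂)
    (δ₀ : ℝ) (hδ₀ : 0 < δ₀) (qc : ℝ → ℝ → ℝ)
    (hqc : ∀ s ∈ Set.Icc c₁ c₂, ∀ δ ∈ Set.Icc (0 : ℝ) δ₀,
      deriv (fun x => phasePhi φ s x δ) (qc s δ) = 0)
    (a : ℝ × ℝ → ℝ → ℂ) (Ca : ℕ → ℝ)
    (ha : ∀ n : ℕ, ∀ t ∈ Set.Icc (1 / 2 : ℝ) 4, ∀ ξ : ℝ × ℝ,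
      ‖iteratedFDeriv ℝ n (fun ζ : ℝ × ℝ => a ζ t) ξ‖ ≤ Ca n * (1 + nrm ξ) ^ (-(n : ℝ)))
    (χ : ℝ → ℝ) (hχ : ContDiff ℝ (⊤ : ℕ∞) χ) (hχs : tsupport χ ⊆ Set.Icc c₁ c₂)
    (ρ₀ : ℝ → ℝ) (hρ₀ : ContDiff ℝ (⊤ : ℕ∞) ρ₀) (hρ₀c : HasCompactSupport ρ₀)
    (ρ₁ : (ℝ × ℝ) × ℝ → ℝ) (hρ₁ : ContDiff ℝ (⊤ : ℕ∞) ρ₁) (hρ₁c : HasCompactSupport ρ₁)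
    (hρ₁s : tsupport ρ₁ ⊆ {z : (ℝ × ℝ) × ℝ | z.2 ∈ Set.Icc (1 / 2 : ℝ) 4}) :
    ∃ C > 0, ∀ j k l : ℕ, (2 : ℝ) ^ (-(k : ℝ)) ≤ δ₀ →
      ∀ κ : ℝ, κ ∈ Set.Icc c₁ c₂ →
      ∀ g : ℝ × ℝ → ℂ,
        Function.support (fhat g) ⊆ sector κ ((2 : ℝ) ^ (-(l : ℝ))) →
        eLpNorm (fun z : (ℝ × ℝ) × ℝ => FIOresc φ qc a ρ₀ ρ₁ χ j k g z.1 z.2)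
            2 volume ≤
          ENNReal.ofReal (C * (2 : ℝ) ^ (-(j : ℝ))) * eLpNorm (fhat g) 2 volume ∧
        eLpNorm (fun z : (ℝ × ℝ) × ℝ => FIOresc φ qc a ρ₀ ρ₁ χ j k g z.1 z.2)
            ⊤ volume ≤
          ENNReal.ofReal (C * (2 : ℝ) ^ (-(l : ℝ))) * eLpNorm (fhat g) ⊤ volume ∧
        eLpNorm (fun z : (ℝ × ℝ) × ℝ => FIOresc φ qc a ρ₀ ρ₁ χ j k g z.1 z.2)
            ⊤ volume ≤
          ENNReal.ofReal C * eLpNorm (fhat g) 1 volume := by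
  obtain ⟨X, hX⟩ := (HasCompactSupport.of_support_subset_isCompact isCompact_Icc
    ((subset_tsupport χ).trans hχs)).exists_bound_of_continuous hχ.continuous
  obtain ⟨C, hC, hest⟩ := basic_estimates_sector_general
    (fun t ht ξ => by simpa using ha 0 t ht ξ) hX hρ₀.continuous hρ₀c hρ₁.continuous hρ₁c hρ₁s
  refine ⟨C, hC, fun j k l _ κ _ g hg => ?_⟩
  rw [Real.rpow_neg zero_le_two (j : ℝ)]
  exact hest (fun ξ t => t ^ 2 * ξ.2 * phasePhiT φ qc (-ξ.1 / (t * ξ.2)) (2 ^ (-(k : ℝ))))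
    (2 ^ (j : ℝ)) _ κ (fhat g) (by positivity) (by positivity) hg
end

section
/- Let M_C be the local circular maximal operator M_C f(y) = sup_{t∈[1,2]} |∫_{S¹} f(y − t x) dσ(x)|, where dσ is the normalized arc-length measure on the unit circle S¹ ⊂ ℝ². If 1 ≤ p, q < ∞ are such that there exists a constant C with ‖M_C f‖_{L^q(ℝ²)} ≤ C ‖f‖_{L^p(ℝ²)} for all f ∈ C₀^∞(ℝ²), then necessarily 1/q ≥ 3/p − 1. -/
open MeasureTheory Set
open scoped ENNReal Real

/-- The local circular maximal operator
`M_C f (y) = sup_{t ∈ [1,2]} |∫_{S¹} f(y - t x) dσ(x)|`,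
where the normalized arc-length measure on `S¹` is realized by the parametrization
`θ ↦ (cos θ, sin θ)`, `θ ∈ [0, 2π]`, with normalizing factor `(2π)⁻¹`. -/
noncomputable def circMax (f : ℝ × ℝ → ℝ) (y : ℝ × ℝ) : ℝ :=
  ⨆ t : Set.Icc (1 : ℝ) 2,
    |(2 * π)⁻¹ * ∫ θ in (0 : ℝ)..(2 * π),
      f (y.1 - t * Real.cos θ, y.2 - t * Real.sin θ)|

/-!
Knapp-type example. Let `f` be a smooth bump adapted to the box `[-δ, δ] × [-δ², δ²]`. A circle of
radius `t ∈ [1, 2]` centred near `(0, t)` is tangent to the horizontal axis near the origin, so it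
stays inside the box along an arc of length about `δ`. Hence `M_C f ≳ δ` on a `δ × 1` rectangle of
centres, while `‖f‖_p ≈ δ^(3/p)`. The assumed bound becomes `δ^(1 + 1/q) ≲ δ^(3/p)`, and `δ → 0`
compares the exponents. The box is the one of the usual example with `δ` in place of `δ^(1/2)`.
-/

open scoped NNReal Manifold Topology

lemma le_of_eventually_rpow_le_mul_rpow {r s K : ℝ}
    (h : ∀ᶠ x in 𝓝[>] (0 : ℝ), x ^ s ≤ K * x ^ r) : r ≤ s := by
  by_contra! hsr
  have hlarge : ∀ᶠ x in 𝓝[>] (0 : ℝ), K < x ^ (s - r) :=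
    (tendsto_rpow_neg_nhdsGT_zero (sub_neg.2 hsr)).eventually_gt_atTop K
  obtain ⟨x, hle, hlt, hx⟩ := (h.and (hlarge.and self_mem_nhdsWithin)).exists
  rw [Real.rpow_sub hx, lt_div_iff₀ (Real.rpow_pos_of_pos hx r)] at hlt
  exact hlt.not_ge hle

section LpNorm

variable {α ε : Type*} [MeasurableSpace α] {μ : Measure α} {p : ℝ≥0∞} {s : Set α} {f : α → ε}
  {c : ℝ≥0∞}

lemma mul_measure_rpow_le_eLpNorm [ENorm ε] (hp : p ≠ 0) (hs : MeasurableSet s)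
    (hμs : μ s ≠ 0) (hf : ∀ x ∈ s, c ≤ ‖f x‖ₑ) : c * μ s ^ p.toReal⁻¹ ≤ eLpNorm f p μ := by
  calc c * μ s ^ p.toReal⁻¹ = eLpNorm (s.indicator fun _ => c) p μ := by
        rw [eLpNorm_indicator_const' hs hμs hp, one_div, enorm_eq_self]
    _ ≤ eLpNorm f p μ := eLpNorm_mono_enorm fun x => by
        by_cases hx : x ∈ s
        · simpa only [indicator_of_mem hx, enorm_eq_self] using hf x hx
        · simp only [indicator_of_notMem hx, enorm_zero, zero_le]

lemma eLpNorm_le_mul_measure_rpow [TopologicalSpace ε] [ENormedAddMonoid ε]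
    (hsupp : Function.support f ⊆ s) (hf : ∀ x, ‖f x‖ₑ ≤ c) :
    eLpNorm f p μ ≤ c * μ s ^ p.toReal⁻¹ := by
  rw [← eLpNorm_restrict_eq_of_support_subset hsupp, ← Measure.restrict_apply_univ]
  exact eLpNorm_le_of_ae_enorm_bound (ae_of_all _ hf)

end LpNorm

lemma exists_contDiff_eq_one_support_subset {E : Type*} [NormedAddCommGroup E] [NormedSpace ℝ E]
    [FiniteDimensional ℝ E] {s t : Set E} (hs : IsClosed s) (hst : s ⊆ interior t) :
    ∃ f : E → ℝ, ContDiff ℝ (⊤ : ℕ∞) f ∧ (∀ x ∈ s, f x = 1) ∧ Function.support f ⊆ t ∧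
      ∀ x, f x ∈ Icc 0 1 := by
  obtain ⟨f, hone, hzero, hf⟩ :=
    exists_contMDiffMap_one_nhds_of_subset_interior 𝓘(ℝ, E) (n := (⊤ : ℕ∞)) hs hst
  exact ⟨f, f.contMDiff.contDiff, hone.self_of_nhdsSet, fun x => not_imp_comm.1 (hzero x), hf⟩

/-- The average of `f` over the circle of centre `y` and radius `t`; `circMax f y` is the supremum
of its absolute value over `t ∈ [1, 2]`. -/
noncomputable def circAvg (f : ℝ × ℝ → ℝ) (t : ℝ) (y : ℝ × ℝ) : ℝ :=
  (2 * π)⁻¹ * ∫ θ in (0 : ℝ)..(2 * π), f (y.1 - t * Real.cos θ, y.2 - t * Real.sin θ)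

section CircularMeans

variable {f : ℝ × ℝ → ℝ} {t : ℝ} {y : ℝ × ℝ}

lemma abs_circAvg_le {M : ℝ} (hf : ∀ x, |f x| ≤ M) : |circAvg f t y| ≤ M := by
  have hint : |∫ θ in (0 : ℝ)..(2 * π), f (y.1 - t * Real.cos θ, y.2 - t * Real.sin θ)|
      ≤ M * |2 * π - 0| :=
    intervalIntegral.norm_integral_le_of_norm_le_const (f := fun θ => f _) fun θ _ => hf _
  have hpi : 0 < 2 * π := Real.two_pi_pos
  rw [sub_zero, abs_of_pos hpi] at hint
  rw [circAvg, abs_mul, abs_of_pos (inv_pos.2 hpi), inv_mul_le_iff₀ hpi]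
  linarith

lemma abs_circAvg_le_circMax {M : ℝ} (hf : ∀ x, |f x| ≤ M) (ht : t ∈ Icc (1 : ℝ) 2) :
    |circAvg f t y| ≤ circMax f y := by
  have hbdd : BddAbove (range fun r : Icc (1 : ℝ) 2 => |circAvg f r y|) :=
    ⟨M, forall_mem_range.2 fun _ => abs_circAvg_le hf⟩
  exact le_ciSup hbdd ⟨t, ht⟩

lemma div_two_pi_le_circAvg {a b : ℝ} (hf : Continuous f) (hf₀ : ∀ x, 0 ≤ f x)
    (ha : 0 ≤ a) (hab : a ≤ b) (hb : b ≤ 2 * π)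
    (harc : ∀ θ ∈ Icc a b, 1 ≤ f (y.1 - t * Real.cos θ, y.2 - t * Real.sin θ)) :
    (b - a) / (2 * π) ≤ circAvg f t y := by
  have hcont : Continuous fun θ : ℝ => f (y.1 - t * Real.cos θ, y.2 - t * Real.sin θ) := by
    fun_prop
  rw [circAvg, div_eq_inv_mul]
  gcongr
  calc b - a = ∫ _ in a..b, (1 : ℝ) := by simp
    _ ≤ ∫ θ in a..b, f (y.1 - t * Real.cos θ, y.2 - t * Real.sin θ) :=
      intervalIntegral.integral_mono_on hab intervalIntegrable_const
        (hcont.intervalIntegrable _ _) harc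
    _ ≤ _ := intervalIntegral.integral_mono_interval ha hab hb
      (ae_of_all _ fun _ => hf₀ _) (hcont.intervalIntegrable _ _)

end CircularMeans

/-- The Knapp box `[-δ, δ] × [-δ², δ²]`, on which the test function equals one. -/
def knappBox (δ : ℝ) : Set (ℝ × ℝ) := Icc (-δ) δ ×ˢ Icc (-δ ^ 2) (δ ^ 2)

/-- The centres `y` whose circle of radius `y.2 ∈ [1, 2]` meets `knappBox δ` in a long arc. -/
def knappCenters (δ : ℝ) : Set (ℝ × ℝ) := Icc (-(δ / 2)) (δ / 2) ×ˢ Icc 1 2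

section Knapp

variable {δ : ℝ}

lemma isCompact_knappBox : IsCompact (knappBox δ) := isCompact_Icc.prod isCompact_Icc

lemma knappBox_subset_interior_knappBox_two_mul (hδ : 0 < δ) :
    knappBox δ ⊆ interior (knappBox (2 * δ)) := by
  rw [knappBox, knappBox, interior_prod_eq, interior_Icc, interior_Icc]
  have hsq : 0 < δ ^ 2 := by positivity
  exact prod_mono (Icc_subset_Ioo (by linarith) (by linarith))
    (Icc_subset_Ioo (by linarith) (by linarith))

lemma volume_knappBox (hδ : 0 ≤ δ) : volume (knappBox δ) = ENNReal.ofReal (4 * δ ^ 3) := by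
  rw [knappBox, Measure.volume_eq_prod, Measure.prod_prod, Real.volume_Icc, Real.volume_Icc,
    ← ENNReal.ofReal_mul (by linarith)]
  ring_nf

lemma measurableSet_knappCenters : MeasurableSet (knappCenters δ) :=
  measurableSet_Icc.prod measurableSet_Icc

lemma volume_knappCenters : volume (knappCenters δ) = ENNReal.ofReal δ := by
  rw [knappCenters, Measure.volume_eq_prod, Measure.prod_prod, Real.volume_Icc, Real.volume_Icc]
  norm_num

lemma circle_point_mem_knappBox {y : ℝ × ℝ} {θ : ℝ} (hy : y ∈ knappCenters δ)
    (hθ : |θ - π / 2| ≤ δ / 4) :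
    (y.1 - y.2 * Real.cos θ, y.2 - y.2 * Real.sin θ) ∈ knappBox δ := by
  obtain ⟨s, rfl⟩ : ∃ s, θ = s + π / 2 := ⟨θ - π / 2, by ring⟩
  rw [add_sub_cancel_right] at hθ
  obtain ⟨⟨hy₁, hy₁'⟩, hy₂, hy₂'⟩ := hy
  have hsin : |y.2 * Real.sin s| ≤ δ / 2 := by
    calc |y.2 * Real.sin s| = y.2 * |Real.sin s| := by rw [abs_mul, abs_of_pos (by linarith)]
      _ ≤ 2 * (δ / 4) := by
        gcongr
        exact Real.abs_sin_le_abs.trans hθ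
      _ = δ / 2 := by ring
  have hcos : y.2 * (1 - Real.cos s) ≤ δ ^ 2 := by
    have hs : s ^ 2 ≤ (δ / 4) ^ 2 := sq_le_sq' (abs_le.1 hθ).1 (abs_le.1 hθ).2
    calc y.2 * (1 - Real.cos s) ≤ 2 * (s ^ 2 / 2) := by
          gcongr
          · exact sub_nonneg.2 (Real.cos_le_one s)
          · linarith [Real.one_sub_sq_div_two_le_cos (x := s)]
      _ ≤ δ ^ 2 := by linarith [sq_nonneg δ]
  have hcos₀ : 0 ≤ y.2 * (1 - Real.cos s) :=
    mul_nonneg (by linarith) (sub_nonneg.2 (Real.cos_le_one s))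
  rw [Real.cos_add_pi_div_two, Real.sin_add_pi_div_two]
  rw [abs_le] at hsin
  refine ⟨⟨?_, ?_⟩, ?_, ?_⟩ <;> dsimp only <;> linarith

variable {f : ℝ × ℝ → ℝ} {p q : ℝ≥0∞}

lemma div_four_pi_le_circMax {y : ℝ × ℝ} (hδ : 0 ≤ δ) (hδ₁ : δ ≤ 1) (hf : Continuous f)
    (hf₀₁ : ∀ x, f x ∈ Icc 0 1) (hbox : ∀ x ∈ knappBox δ, f x = 1) (hy : y ∈ knappCenters δ) :
    δ / (4 * π) ≤ circMax f y := by
  have hpi := Real.pi_gt_three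
  have harc : ∀ θ ∈ Icc (π / 2 - δ / 4) (π / 2 + δ / 4),
      1 ≤ f (y.1 - y.2 * Real.cos θ, y.2 - y.2 * Real.sin θ) := fun θ hθ =>
    (hbox _ (circle_point_mem_knappBox hy (abs_sub_le_iff.2
      ⟨by linarith [hθ.2], by linarith [hθ.1]⟩))).ge
  calc δ / (4 * π) = (π / 2 + δ / 4 - (π / 2 - δ / 4)) / (2 * π) := by field_simp; ring
    _ ≤ circAvg f y.2 y := div_two_pi_le_circAvg hf (fun x => (hf₀₁ x).1)
        (by linarith) (by linarith) (by linarith) harc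
    _ ≤ |circAvg f y.2 y| := le_abs_self _
    _ ≤ circMax f y := abs_circAvg_le_circMax
        (fun x => abs_le.2 ⟨by linarith [(hf₀₁ x).1], (hf₀₁ x).2⟩) hy.2

lemma ofReal_rpow_le_eLpNorm_circMax (hq : q ≠ 0) (hδ : 0 < δ) (hδ₁ : δ ≤ 1) (hf : Continuous f)
    (hf₀₁ : ∀ x, f x ∈ Icc 0 1) (hbox : ∀ x ∈ knappBox δ, f x = 1) :
    ENNReal.ofReal (δ ^ (1 + q.toReal⁻¹) / (4 * π)) ≤ eLpNorm (circMax f) q volume := by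
  calc ENNReal.ofReal (δ ^ (1 + q.toReal⁻¹) / (4 * π))
      = ENNReal.ofReal (δ / (4 * π)) * volume (knappCenters δ) ^ q.toReal⁻¹ := by
        rw [volume_knappCenters, ENNReal.ofReal_rpow_of_pos hδ,
          ← ENNReal.ofReal_mul (by positivity), Real.rpow_one_add' hδ.le (by positivity),
          mul_div_right_comm]
    _ ≤ eLpNorm (circMax f) q volume :=
      mul_measure_rpow_le_eLpNorm hq measurableSet_knappCenters
        (by simpa [volume_knappCenters] using hδ) fun y hy =>
          (ENNReal.ofReal_le_ofReal (div_four_pi_le_circMax hδ.le hδ₁ hf hf₀₁ hbox hy)).trans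
            (Real.ofReal_le_enorm _)

lemma eLpNorm_le_of_support_subset_knappBox (hδ : 0 < δ) (hf₀₁ : ∀ x, f x ∈ Icc 0 1)
    (hsupp : Function.support f ⊆ knappBox δ) :
    eLpNorm f p volume ≤ ENNReal.ofReal ((4 * δ ^ 3) ^ p.toReal⁻¹) := by
  have hf : ∀ x, ‖f x‖ₑ ≤ 1 := fun x => by
    rw [Real.enorm_of_nonneg (hf₀₁ x).1]
    exact ENNReal.ofReal_le_one.2 (hf₀₁ x).2
  rw [← ENNReal.ofReal_rpow_of_pos (by positivity), ← volume_knappBox hδ.le, ← one_mul (_ ^ _)]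
  exact eLpNorm_le_mul_measure_rpow hsupp hf

lemma rpow_le_mul_rpow_of_eLpNorm_circMax_le {C : ℝ≥0} (hq : q ≠ 0)
    (hC : ∀ f : ℝ × ℝ → ℝ, ContDiff ℝ (⊤ : ℕ∞) f → HasCompactSupport f →
      eLpNorm (circMax f) q volume ≤ C * eLpNorm f p volume)
    (hδ : 0 < δ) (hδ₁ : δ ≤ 1) :
    δ ^ (1 + q.toReal⁻¹) ≤ 4 * π * C * 32 ^ p.toReal⁻¹ * δ ^ (3 * p.toReal⁻¹) := by
  obtain ⟨f, hsmooth, hbox, hsupp, hf₀₁⟩ := exists_contDiff_eq_one_support_subset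
    isCompact_knappBox.isClosed (knappBox_subset_interior_knappBox_two_mul hδ)
  have hcompact : HasCompactSupport f := HasCompactSupport.intro isCompact_knappBox
    fun x hx => Function.notMem_support.1 fun hx' => hx (hsupp hx')
  have hpow : (4 * (2 * δ) ^ 3) ^ p.toReal⁻¹ = 32 ^ p.toReal⁻¹ * δ ^ (3 * p.toReal⁻¹) := by
    rw [Real.rpow_mul hδ.le, ← Real.mul_rpow (by positivity) (by positivity)]
    norm_num [mul_pow, ← mul_assoc]
  have hchain := calc
    ENNReal.ofReal (δ ^ (1 + q.toReal⁻¹) / (4 * π))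
      ≤ eLpNorm (circMax f) q volume :=
        ofReal_rpow_le_eLpNorm_circMax hq hδ hδ₁ hsmooth.continuous hf₀₁ hbox
    _ ≤ C * eLpNorm f p volume := hC f hsmooth hcompact
    _ ≤ C * ENNReal.ofReal ((4 * (2 * δ) ^ 3) ^ p.toReal⁻¹) := by
        gcongr
        exact eLpNorm_le_of_support_subset_knappBox (by positivity) hf₀₁ hsupp
    _ = ENNReal.ofReal (C * (4 * (2 * δ) ^ 3) ^ p.toReal⁻¹) := by
        rw [ENNReal.ofReal_mul C.coe_nonneg, ENNReal.ofReal_coe_nnreal]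
  rw [ENNReal.ofReal_le_ofReal_iff (by positivity), hpow, div_le_iff₀ (by positivity)] at hchain
  linarith

end Knapp

theorem circular_maximal_necessary_general {p q : ℝ≥0∞} (hp : p ≠ 0) (hq : q ≠ 0)
    (hbound : ∃ C : ℝ≥0, ∀ f : ℝ × ℝ → ℝ, ContDiff ℝ (⊤ : ℕ∞) f → HasCompactSupport f →
      eLpNorm (circMax f) q volume ≤ C * eLpNorm f p volume) :
    3 / p ≤ 1 + 1 / q := by
  obtain ⟨C, hC⟩ := hbound
  have hexp : 3 * p.toReal⁻¹ ≤ 1 + q.toReal⁻¹ := le_of_eventually_rpow_le_mul_rpow <| by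
    filter_upwards [Ioc_mem_nhdsGT zero_lt_one] with δ hδ
    exact rpow_le_mul_rpow_of_eLpNorm_circMax_le hq hC hδ.1 hδ.2
  rw [← ENNReal.toReal_le_toReal (by finiteness) (by finiteness),
    ENNReal.toReal_add (by finiteness) (by finiteness)]
  simpa [div_eq_mul_inv] using hexp

/-- **Necessary condition for the circular maximal function.**  If `1 ≤ p, q < ∞` are such
that `‖M_C f‖_{L^q(ℝ²)} ≤ C ‖f‖_{L^p(ℝ²)}` for all `f ∈ C₀^∞(ℝ²)`, then `1/q ≥ 3/p − 1`. -/
theorem circular_maximal_necessary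
    (p q : ℝ) (hp : 1 ≤ p) (hq : 1 ≤ q)
    (hbound : ∃ C : ℝ, ∀ f : ℝ × ℝ → ℝ, ContDiff ℝ (⊤ : ℕ∞) f → HasCompactSupport f →
      eLpNorm (circMax f) (ENNReal.ofReal q) volume ≤
        ENNReal.ofReal C * eLpNorm f (ENNReal.ofReal p) volume) :
    3 / p - 1 ≤ 1 / q := by
  have h := circular_maximal_necessary_general (p := ENNReal.ofReal p) (q := ENNReal.ofReal q)
    (by positivity) (by positivity) (hbound.imp' Real.toNNReal fun _ => id)
  rwa [sub_le_iff_le_add', ← ENNReal.ofReal_le_ofReal_iff (by positivity),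
    ENNReal.ofReal_add zero_le_one (by positivity), ENNReal.ofReal_div_of_pos (by positivity),
    ENNReal.ofReal_div_of_pos (by positivity), ENNReal.ofReal_ofNat, ENNReal.ofReal_one]
end

section
/- Let 1 < p, q < ∞ satisfy 1/(2p) < 1/q ≤ 1/p and 1/q > 2/p − 1. Let η ∈ C₀^∞(ℝ) be supported in a sufficiently small neighborhood of the origin. Then there exists a constant C = C(p, q, η) such that the maximal operator along the parabola through the origin, M_{P₂} f(y) = sup_{t∈[1,2]} |∫_ℝ f(y₁ − t x, y₂ − t² x²) η(x) dx|, satisfies ‖M_{P₂} f‖_{L^q(ℝ²)} ≤ C ‖f‖_{L^p(ℝ²)} for all f ∈ C₀^∞(ℝ²). -/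
open MeasureTheory Set
open scoped ENNReal

/-- The maximal operator along the parabola `(x, x²)` through the origin, with nonisotropic
dilations `(t, t²)`:
`M_{P₂} f (y) = sup_{t ∈ [1,2]} |∫ f(y₁ - t x, y₂ - t² x²) η(x) dx|`. -/
noncomputable def maxOpParabola (η : ℝ → ℝ) (f : ℝ × ℝ → ℝ) (y : ℝ × ℝ) : ℝ :=
  ⨆ t : Set.Icc (1 : ℝ) 2,
    |∫ x : ℝ, f (y.1 - t * x, y.2 - t ^ 2 * x ^ 2) * η x|

/-!
The dilations `(t, t²)` preserve the parabola, so the substitution `u = t x` removes the supremum: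
`M_{P₂} f` is at most a constant times a single averaging operator `T |f|`,
`T F (y) = ∫_s F (y₁ - u, y₂ - u²) du`, over a bounded interval `s`.

When `q = p`, the bound for `T` is Hölder's inequality together with `∫ T h = |s| ∫ h`.
When `q > p`, the curvature enters through `∫ T h · (T G)^r ≤ C ‖h‖₁ ‖G‖_r^r` for `r > 2`. By
duality this says that `T G` is in `L^r` along each translate of the parabola. There, the map
`(u, v) ↦ (u - v, u² - v²)` has Jacobian `2 |u - v|`, and the Hölder inequality that introduces
this weight costs the kernel `|u - v|^(-1/(r-1))`, which is locally integrable because `r > 2`.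

With `m = q/p - 1`, `r = (q - 1)/m`, `h = F^p` and `G = F^((q-p)/(q-1))`, so that `G^r = F^p`,
Hölder's inequality gives `(T F)^q ≤ T h · (T G)^(q-1) = (T h)^(1-m) (T h · (T G)^r)^m`. The
condition `1/q > 2/p - 1` is `r > 2`, and `q ≤ 2p` is `m ≤ 1`.
-/

section Holder

variable {α : Type*} [MeasurableSpace α] {μ : Measure α}

lemma rpow_lintegral_mul_le {p q : ℝ} (hpq : p.HolderConjugate q) {f g : α → ℝ≥0∞}
    (hf : AEMeasurable f μ) (hg : AEMeasurable g μ) :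
    (∫⁻ a, f a * g a ∂μ) ^ p ≤ (∫⁻ a, f a ^ p ∂μ) * (∫⁻ a, g a ^ q ∂μ) ^ (p - 1) := by
  have hp := hpq.nonneg
  calc (∫⁻ a, f a * g a ∂μ) ^ p
      ≤ ((∫⁻ a, f a ^ p ∂μ) ^ (1 / p) * (∫⁻ a, g a ^ q ∂μ) ^ (1 / q)) ^ p := by
        gcongr
        exact ENNReal.lintegral_mul_le_Lp_mul_Lq μ hpq hf hg
    _ = (∫⁻ a, f a ^ p ∂μ) * (∫⁻ a, g a ^ q ∂μ) ^ (p - 1) := by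
        rw [ENNReal.mul_rpow_of_nonneg _ _ hp, ← ENNReal.rpow_mul, ← ENNReal.rpow_mul,
          one_div_mul_cancel hpq.ne_zero, ENNReal.rpow_one, one_div_mul_eq_div,
          hpq.div_conj_eq_sub_one]

lemma rpow_lintegral_le_lintegral_rpow_mul_weight {r : ℝ} (hr : 1 < r) {f w : α → ℝ≥0∞}
    (hf : AEMeasurable f μ) (hw : AEMeasurable w μ) (hw_ne_zero : ∀ᵐ a ∂μ, w a ≠ 0)
    (hw_ne_top : ∀ᵐ a ∂μ, w a ≠ ∞) :
    (∫⁻ a, f a ∂μ) ^ r ≤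
      (∫⁻ a, f a ^ r * w a ∂μ) * (∫⁻ a, w a ^ (-(r - 1)⁻¹) ∂μ) ^ (r - 1) := by
  have hr0 : 0 < r := by linarith
  have hr1 : r - 1 ≠ 0 := by linarith
  have h_split : ∫⁻ a, f a ∂μ = ∫⁻ a, f a * w a ^ r⁻¹ * w a ^ (-r⁻¹) ∂μ := by
    refine lintegral_congr_ae ?_
    filter_upwards [hw_ne_zero, hw_ne_top] with a h0 htop
    rw [mul_assoc, ← ENNReal.rpow_add _ _ h0 htop, add_neg_cancel, ENNReal.rpow_zero, mul_one]
  have h_exp : -r⁻¹ * r.conjExponent = -(r - 1)⁻¹ := by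
    rw [Real.conjExponent]
    field_simp
  rw [h_split]
  refine (rpow_lintegral_mul_le (.conjExponent hr) (by fun_prop) (by fun_prop)).trans_eq ?_
  simp only [ENNReal.mul_rpow_of_nonneg _ _ hr0.le, ← ENNReal.rpow_mul, h_exp,
    inv_mul_cancel₀ hr0.ne', ENNReal.rpow_one]

lemma lintegral_mul_rpow_mul_le {m : ℝ} (hm0 : 0 ≤ m) (hm1 : m ≤ 1) (r : ℝ) {f g : α → ℝ≥0∞}
    (hf : AEMeasurable f μ) (hg : AEMeasurable g μ) :
    ∫⁻ a, f a * g a ^ (r * m) ∂μ ≤ (∫⁻ a, f a ∂μ) ^ (1 - m) * (∫⁻ a, f a * g a ^ r ∂μ) ^ m := by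
  have hm1' : 0 ≤ 1 - m := sub_nonneg.2 hm1
  calc ∫⁻ a, f a * g a ^ (r * m) ∂μ
      = ∫⁻ a, f a ^ (1 - m) * (f a * g a ^ r) ^ m ∂μ := by
        refine lintegral_congr fun a ↦ ?_
        rw [ENNReal.mul_rpow_of_nonneg _ _ hm0, ← mul_assoc,
          ← ENNReal.rpow_add_of_nonneg _ _ hm1' hm0, sub_add_cancel, ENNReal.rpow_one,
          ← ENNReal.rpow_mul]
    _ ≤ (∫⁻ a, f a ∂μ) ^ (1 - m) * (∫⁻ a, f a * g a ^ r ∂μ) ^ m :=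
      ENNReal.lintegral_mul_norm_pow_le hf (by fun_prop) hm1' hm0 (sub_add_cancel _ _)

end Holder

lemma lintegral_comp_mul_left {a : ℝ} (ha : a ≠ 0) (g : ℝ → ℝ≥0∞) :
    ∫⁻ x, g (a * x) = ‖a‖ₑ⁻¹ * ∫⁻ x, g x := by
  have h_map := lintegral_map_equiv g (Homeomorph.mulLeft₀ a ha).toMeasurableEquiv (μ := volume)
  simp only [Homeomorph.toMeasurableEquiv_coe, Homeomorph.coe_mulLeft₀] at h_map
  rw [← h_map, Real.map_volume_mul_left ha, lintegral_smul_measure, smul_eq_mul,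
    ← Real.enorm_eq_ofReal_abs, enorm_inv ha]

lemma enorm_iSup_abs_le {ι : Type*} (a : ι → ℝ) : ‖⨆ i, |a i|‖ₑ ≤ ⨆ i, ‖a i‖ₑ := by
  rcases eq_or_ne (⨆ i, ‖a i‖ₑ) ∞ with h_top | h_top
  · exact h_top ▸ le_top
  rw [Real.enorm_eq_ofReal (Real.iSup_nonneg fun i ↦ abs_nonneg (a i))]
  refine ENNReal.ofReal_le_of_le_toReal (Real.iSup_le (fun i ↦ ?_) ENNReal.toReal_nonneg)
  rw [← ENNReal.ofReal_le_iff_le_toReal h_top, ← Real.enorm_eq_ofReal_abs]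
  exact le_iSup (fun i ↦ ‖a i‖ₑ) i

lemma setLIntegral_enorm_rpow_neg_ne_top {K : Set ℝ} (hK : IsCompact K) {c : ℝ} (hc : c < 1) :
    ∫⁻ w in K, ‖w‖ₑ ^ (-c) ≠ ∞ := by
  have h_int : IntegrableOn (fun w : ℝ ↦ ‖w‖ ^ (-c)) K :=
    (locallyIntegrable_of_norm_le_rpow (C := 1) (by simp) (by simpa)
      (by simp [abs_of_nonneg, Real.rpow_nonneg])
      (by fun_prop : Measurable fun w : ℝ ↦ ‖w‖ ^ (-c)).aestronglyMeasurable)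
      |>.integrableOn_isCompact hK
  refine (lintegral_congr_ae ?_).trans_ne h_int.2.ne
  filter_upwards [ae_restrict_of_ae (Measure.ae_ne volume 0)] with w hw
  rw [Real.enorm_of_nonneg (by positivity : 0 ≤ ‖w‖ ^ (-c)),
    ← ENNReal.ofReal_rpow_of_pos (by positivity), ofReal_norm]

lemma exists_setLIntegral_enorm_sub_rpow_neg_le {s : Set ℝ} (hs : volume s ≠ ∞) {c : ℝ}
    (hc0 : 0 ≤ c) (hc1 : c < 1) :
    ∃ C ≠ ∞, ∀ u : ℝ, ∫⁻ v in s, ‖u - v‖ₑ ^ (-c) ≤ C := by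
  set k : ℝ → ℝ≥0∞ := (Icc (-1) 1).indicator fun w ↦ ‖w‖ₑ ^ (-c)
  have hk : ∫⁻ w, k w ≠ ∞ := by
    rw [lintegral_indicator measurableSet_Icc]
    exact setLIntegral_enorm_rpow_neg_ne_top isCompact_Icc hc1
  have h_le (w : ℝ) : ‖w‖ₑ ^ (-c) ≤ k w + 1 := by
    by_cases hw : w ∈ Icc (-1) 1
    · simp [k, hw]
    · have h_one : 1 ≤ ‖w‖ₑ := by
        rw [← ofReal_norm, ENNReal.one_le_ofReal, Real.norm_eq_abs]
        exact (not_le.1 fun h ↦ hw (abs_le.1 h)).le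
      calc ‖w‖ₑ ^ (-c) ≤ ‖w‖ₑ ^ (0 : ℝ) :=
            ENNReal.rpow_le_rpow_of_exponent_le h_one (neg_nonpos.2 hc0)
        _ ≤ k w + 1 := by simp
  refine ⟨(∫⁻ w, k w) + volume s, ENNReal.add_ne_top.2 ⟨hk, hs⟩, fun u ↦ ?_⟩
  calc ∫⁻ v in s, ‖u - v‖ₑ ^ (-c) ≤ ∫⁻ v in s, (k (u - v) + 1) := lintegral_mono fun v ↦ h_le _
    _ = (∫⁻ v in s, k (u - v)) + volume s := by
      rw [lintegral_add_right _ measurable_const, setLIntegral_one]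
    _ ≤ (∫⁻ v, k (u - v)) + volume s := by
      gcongr
      exact Measure.restrict_le_self
    _ = (∫⁻ w, k w) + volume s := by rw [lintegral_sub_left_eq_self k u]

lemma lintegral_lintegral_parabola_sub_mul_enorm {H : ℝ × ℝ → ℝ≥0∞} (hH : Measurable H) :
    ∫⁻ u : ℝ, ∫⁻ v : ℝ, H ((u, u ^ 2) - (v, v ^ 2)) * ‖u - v‖ₑ = 2⁻¹ * ∫⁻ z, H z := by
  have h_sub (u : ℝ) : ∫⁻ v : ℝ, H ((u, u ^ 2) - (v, v ^ 2)) * ‖u - v‖ₑ =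
      ∫⁻ a : ℝ, H (a, 2 * a * u - a ^ 2) * ‖a‖ₑ := by
    rw [← lintegral_sub_left_eq_self (fun a ↦ H (a, 2 * a * u - a ^ 2) * ‖a‖ₑ) u]
    refine lintegral_congr fun v ↦ ?_
    rw [Prod.mk_sub_mk]
    congr 3
    ring
  have h_slice {a : ℝ} (ha : a ≠ 0) :
      (∫⁻ u : ℝ, H (a, 2 * a * u - a ^ 2)) * ‖a‖ₑ = 2⁻¹ * ∫⁻ b, H (a, b) := by
    rw [lintegral_comp_mul_left (mul_ne_zero two_ne_zero ha) fun b ↦ H (a, b - a ^ 2),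
      lintegral_sub_right_eq_self (fun b ↦ H (a, b)), enorm_mul,
      ENNReal.mul_inv (by simp) (by simp), mul_right_comm, mul_assoc _ ‖a‖ₑ⁻¹,
      ENNReal.inv_mul_cancel (by simpa) (by simp), mul_one,
      Real.enorm_eq_ofReal zero_le_two, ENNReal.ofReal_ofNat]
  calc ∫⁻ u : ℝ, ∫⁻ v : ℝ, H ((u, u ^ 2) - (v, v ^ 2)) * ‖u - v‖ₑ
      = ∫⁻ u : ℝ, ∫⁻ a : ℝ, H (a, 2 * a * u - a ^ 2) * ‖a‖ₑ := lintegral_congr h_sub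
    _ = ∫⁻ a : ℝ, (∫⁻ u : ℝ, H (a, 2 * a * u - a ^ 2)) * ‖a‖ₑ := by
      rw [lintegral_lintegral_swap (by fun_prop)]
      exact lintegral_congr fun a ↦ lintegral_mul_const _ (by fun_prop)
    _ = ∫⁻ a : ℝ, 2⁻¹ * ∫⁻ b, H (a, b) :=
      lintegral_congr_ae ((Measure.ae_ne volume 0).mono fun a ↦ h_slice)
    _ = 2⁻¹ * ∫⁻ z, H z := by
      rw [lintegral_const_mul' _ _ (by simp), Measure.volume_eq_prod,
        lintegral_prod _ hH.aemeasurable]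

/-- The integral of `F` along the arc `{y - (u, u²) : u ∈ s}` of a reflected parabola with vertex
`y`. Its bounds control `maxOpParabola`. It is not divided by the length of `s`, and it takes values
in `ℝ≥0∞` so that no integrability condition is needed. -/
noncomputable def parabolaAverage (s : Set ℝ) (F : ℝ × ℝ → ℝ≥0∞) (y : ℝ × ℝ) : ℝ≥0∞ :=
  ∫⁻ u in s, F (y - (u, u ^ 2))

section ParabolaAverage

variable {s : Set ℝ} {F G h : ℝ × ℝ → ℝ≥0∞}

@[fun_prop]
lemma measurable_parabolaAverage (hF : Measurable F) : Measurable (parabolaAverage s F) :=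
  Measurable.lintegral_prod_right' (f := fun z : (ℝ × ℝ) × ℝ ↦ F (z.1 - (z.2, z.2 ^ 2)))
    (by fun_prop)

lemma lintegral_parabolaAverage_mul (hh : Measurable h) (hG : Measurable G) :
    ∫⁻ y, parabolaAverage s h y * G y = ∫⁻ z, h z * ∫⁻ u in s, G (z + (u, u ^ 2)) := by
  calc ∫⁻ y, parabolaAverage s h y * G y
      = ∫⁻ y, ∫⁻ u in s, h (y - (u, u ^ 2)) * G y :=
        lintegral_congr fun y ↦ (lintegral_mul_const _ (by fun_prop)).symm
    _ = ∫⁻ u in s, ∫⁻ y, h (y - (u, u ^ 2)) * G y := lintegral_lintegral_swap (by fun_prop)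
    _ = ∫⁻ u in s, ∫⁻ z, h z * G (z + (u, u ^ 2)) := by
      refine lintegral_congr fun u ↦ ?_
      rw [← lintegral_add_right_eq_self _ ((u, u ^ 2) : ℝ × ℝ)]
      simp only [add_sub_cancel_right]
    _ = ∫⁻ z, ∫⁻ u in s, h z * G (z + (u, u ^ 2)) := lintegral_lintegral_swap (by fun_prop)
    _ = ∫⁻ z, h z * ∫⁻ u in s, G (z + (u, u ^ 2)) :=
      lintegral_congr fun z ↦ lintegral_const_mul _ (by fun_prop)

lemma lintegral_parabolaAverage (hF : Measurable F) :
    ∫⁻ y, parabolaAverage s F y = volume s * ∫⁻ y, F y := by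
  have h_dual := lintegral_parabolaAverage_mul (s := s) hF (measurable_const (a := 1))
  simpa only [mul_one, setLIntegral_one, lintegral_mul_const _ hF, mul_comm] using h_dual

lemma exists_lintegral_parabolaAverage_rpow_comp_parabola_le (hs : volume s ≠ ∞) {r : ℝ}
    (hr : 2 < r) :
    ∃ C ≠ ∞, ∀ G : ℝ × ℝ → ℝ≥0∞, Measurable G → ∀ z : ℝ × ℝ,
      ∫⁻ u, parabolaAverage s G (z + (u, u ^ 2)) ^ r ≤ C * ∫⁻ y, G y ^ r := by
  have hr1 : 0 < r - 1 := by linarith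
  obtain ⟨A, hA, h_kernel⟩ := exists_setLIntegral_enorm_sub_rpow_neg_le hs
    (inv_nonneg.2 hr1.le) (inv_lt_one_of_one_lt₀ (by linarith : 1 < r - 1))
  have hAr : A ^ (r - 1) ≠ ∞ := ENNReal.rpow_ne_top_of_nonneg hr1.le hA
  refine ⟨A ^ (r - 1) * 2⁻¹, ENNReal.mul_ne_top hAr (by simp), fun G hG z ↦ ?_⟩
  set H : ℝ × ℝ → ℝ≥0∞ := fun w ↦ G (z + w) ^ r with hH
  have h_pointwise (u : ℝ) : parabolaAverage s G (z + (u, u ^ 2)) ^ r ≤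
      A ^ (r - 1) * ∫⁻ v, H ((u, u ^ 2) - (v, v ^ 2)) * ‖u - v‖ₑ := by
    have h_ne : ∀ᵐ v ∂volume.restrict s, ‖u - v‖ₑ ≠ 0 := by
      filter_upwards [ae_restrict_of_ae (Measure.ae_ne volume u)] with v hv
      simpa [sub_eq_zero] using hv.symm
    refine (rpow_lintegral_le_lintegral_rpow_mul_weight (by linarith) (by fun_prop)
      (by fun_prop : AEMeasurable (fun v ↦ ‖u - v‖ₑ) _) h_ne (by simp)).trans ?_
    rw [mul_comm]
    simp only [hH, add_sub_assoc]
    gcongr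
    · exact h_kernel u
    · exact Measure.restrict_le_self
  calc ∫⁻ u, parabolaAverage s G (z + (u, u ^ 2)) ^ r
      ≤ ∫⁻ u, A ^ (r - 1) * ∫⁻ v, H ((u, u ^ 2) - (v, v ^ 2)) * ‖u - v‖ₑ :=
        lintegral_mono h_pointwise
    _ = A ^ (r - 1) * 2⁻¹ * ∫⁻ w, H w := by
      rw [lintegral_const_mul' _ _ hAr,
        lintegral_lintegral_parabola_sub_mul_enorm (by fun_prop), mul_assoc]
    _ = A ^ (r - 1) * 2⁻¹ * ∫⁻ y, G y ^ r := by
      rw [lintegral_add_left_eq_self (fun y ↦ G y ^ r) z]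

lemma exists_lintegral_parabolaAverage_mul_rpow_le (hs : volume s ≠ ∞) {r : ℝ} (hr : 2 < r) :
    ∃ C ≠ ∞, ∀ h G : ℝ × ℝ → ℝ≥0∞, Measurable h → Measurable G →
      ∫⁻ y, parabolaAverage s h y * parabolaAverage s G y ^ r ≤
        C * ((∫⁻ y, h y) * ∫⁻ y, G y ^ r) := by
  obtain ⟨C, hC, h_curve⟩ := exists_lintegral_parabolaAverage_rpow_comp_parabola_le hs hr
  refine ⟨C, hC, fun h G hh hG ↦ ?_⟩
  calc ∫⁻ y, parabolaAverage s h y * parabolaAverage s G y ^ r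
      = ∫⁻ z, h z * ∫⁻ u in s, parabolaAverage s G (z + (u, u ^ 2)) ^ r :=
        lintegral_parabolaAverage_mul hh (by fun_prop)
    _ ≤ ∫⁻ z, h z * (C * ∫⁻ y, G y ^ r) := by
      gcongr with z
      exact (setLIntegral_le_lintegral _ _).trans (h_curve G hG z)
    _ = C * ((∫⁻ y, h y) * ∫⁻ y, G y ^ r) := by rw [lintegral_mul_const _ hh, mul_left_comm]

lemma parabolaAverage_rpow_le {p q : ℝ} (hp : 0 ≤ p) (hpq : p ≤ q) (hq : 1 < q)
    (hF : Measurable F) (y : ℝ × ℝ) :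
    parabolaAverage s F y ^ q ≤ parabolaAverage s (fun z ↦ F z ^ p) y *
      parabolaAverage s (fun z ↦ F z ^ ((q - p) / (q - 1))) y ^ (q - 1) := by
  have hq0 : 0 < q := by linarith
  have hq1 : 0 < q - 1 := by linarith
  have h_split (x : ℝ≥0∞) : x = x ^ (p / q) * x ^ ((q - p) / q) := by
    rw [← ENNReal.rpow_add_of_nonneg _ _ (by positivity) (div_nonneg (by linarith) hq0.le),
      ← add_div, add_sub_cancel, div_self hq0.ne', ENNReal.rpow_one]
  have h_exp : (q - p) / q * q.conjExponent = (q - p) / (q - 1) := by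
    rw [Real.conjExponent]
    field_simp
  have h_holder := rpow_lintegral_mul_le (μ := volume.restrict s) (.conjExponent hq)
    (f := fun u ↦ F (y - (u, u ^ 2)) ^ (p / q)) (g := fun u ↦ F (y - (u, u ^ 2)) ^ ((q - p) / q))
    (by fun_prop) (by fun_prop)
  simp only [← h_split, ← ENNReal.rpow_mul, div_mul_cancel₀ _ hq0.ne', h_exp] at h_holder
  exact h_holder

lemma lintegral_parabolaAverage_rpow_le {q : ℝ} (hq : 1 < q) (hF : Measurable F) :
    ∫⁻ y, parabolaAverage s F y ^ q ≤ volume s ^ q * ∫⁻ y, F y ^ q := by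
  have h_jensen (y : ℝ × ℝ) : parabolaAverage s F y ^ q ≤
      parabolaAverage s (fun z ↦ F z ^ q) y * volume s ^ (q - 1) := by
    simpa [parabolaAverage] using parabolaAverage_rpow_le (by linarith) le_rfl hq hF y (s := s)
  calc ∫⁻ y, parabolaAverage s F y ^ q
      ≤ ∫⁻ y, parabolaAverage s (fun z ↦ F z ^ q) y * volume s ^ (q - 1) := lintegral_mono h_jensen
    _ = volume s ^ (1 : ℝ) * volume s ^ (q - 1) * ∫⁻ y, F y ^ q := by
      rw [lintegral_mul_const _ (by fun_prop), lintegral_parabolaAverage (by fun_prop),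
        ENNReal.rpow_one, mul_right_comm]
    _ = volume s ^ q * ∫⁻ y, F y ^ q := by
      rw [← ENNReal.rpow_add_of_nonneg _ _ zero_le_one (by linarith), add_sub_cancel]

lemma exists_lintegral_parabolaAverage_rpow_le_of_lt (hs : volume s ≠ ∞) {p q : ℝ} (hp : 1 < p)
    (hpq : p < q) (hq : q ≤ 2 * p) (hpq' : 2 / p - 1 < 1 / q) :
    ∃ C ≠ ∞, ∀ F : ℝ × ℝ → ℝ≥0∞, Measurable F →
      ∫⁻ y, parabolaAverage s F y ^ q ≤ C * (∫⁻ y, F y ^ p) ^ (q / p) := by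
  have hp0 : 0 < p := by linarith
  have hq1 : 0 < q - 1 := by linarith
  set m := q / p - 1 with hm
  have hm0 : 0 < m := sub_pos.2 ((one_lt_div hp0).2 hpq)
  have hm1 : 0 ≤ 1 - m := by linarith [(div_le_iff₀ hp0).2 hq]
  set r := (q - 1) / m with hr
  have hr2 : 2 < r := by
    have h_mul : (2 / p - 1) * q < 1 := (lt_div_iff₀ (by linarith)).1 hpq'
    rw [hr, lt_div_iff₀ hm0, hm]
    linarith [(by ring : (2 / p - 1) * q = 2 * (q / p) - q)]
  obtain ⟨C, hC, h_trilinear⟩ := exists_lintegral_parabolaAverage_mul_rpow_le hs hr2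
  refine ⟨volume s ^ (1 - m) * C ^ m, by finiteness, fun F hF ↦ ?_⟩
  set h : ℝ × ℝ → ℝ≥0∞ := fun z ↦ F z ^ p
  set G : ℝ × ℝ → ℝ≥0∞ := fun z ↦ F z ^ ((q - p) / (q - 1)) with hG
  set N := ∫⁻ z, h z
  have hGr : ∫⁻ z, G z ^ r = N := by
    have h_exp : (q - p) / (q - 1) * r = p := by
      have : q - p ≠ 0 := by linarith
      rw [hr, hm]
      field_simp
    simp only [hG, ← ENNReal.rpow_mul, h_exp]
    rfl
  calc ∫⁻ y, parabolaAverage s F y ^ q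
      ≤ ∫⁻ y, parabolaAverage s h y * parabolaAverage s G y ^ (q - 1) :=
        lintegral_mono (parabolaAverage_rpow_le hp0.le hpq.le (hp.trans hpq) hF)
    _ ≤ (∫⁻ y, parabolaAverage s h y) ^ (1 - m) *
          (∫⁻ y, parabolaAverage s h y * parabolaAverage s G y ^ r) ^ m := by
      rw [← div_mul_cancel₀ (q - 1) hm0.ne']
      exact lintegral_mul_rpow_mul_le hm0.le (sub_nonneg.1 hm1) r (by fun_prop) (by fun_prop)
    _ ≤ (volume s * N) ^ (1 - m) * (C * (N * N)) ^ m := by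
      gcongr
      · exact (lintegral_parabolaAverage (by fun_prop)).le
      · exact (h_trilinear h G (by fun_prop) (by fun_prop)).trans_eq (by rw [hGr])
    _ = volume s ^ (1 - m) * C ^ m * (N ^ (1 - m) * N ^ m * N ^ m) := by
      simp only [ENNReal.mul_rpow_of_nonneg _ _ hm1, ENNReal.mul_rpow_of_nonneg _ _ hm0.le]
      ring
    _ = volume s ^ (1 - m) * C ^ m * N ^ (q / p) := by
      rw [← ENNReal.rpow_add_of_nonneg _ _ hm1 hm0.le, sub_add_cancel,
        ← ENNReal.rpow_add_of_nonneg _ _ zero_le_one hm0.le, hm, add_sub_cancel]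

lemma exists_eLpNorm_parabolaAverage_le (hs : volume s ≠ ∞) {p q : ℝ} (hp : 1 < p)
    (hpq : p ≤ q) (hq : q ≤ 2 * p) (hpq' : 2 / p - 1 < 1 / q) :
    ∃ C ≠ ∞, ∀ F : ℝ × ℝ → ℝ≥0∞, Measurable F →
      eLpNorm (parabolaAverage s F) (ENNReal.ofReal q) volume ≤
        C * eLpNorm F (ENNReal.ofReal p) volume := by
  have hp0 : 0 < p := by linarith
  have hq0 : 0 < q := by linarith
  obtain ⟨C, hC, h_bound⟩ : ∃ C ≠ ∞, ∀ F : ℝ × ℝ → ℝ≥0∞, Measurable F →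
      ∫⁻ y, parabolaAverage s F y ^ q ≤ C * (∫⁻ y, F y ^ p) ^ (q / p) := by
    rcases hpq.eq_or_lt with rfl | hlt
    · refine ⟨volume s ^ p, by finiteness, fun F hF ↦ ?_⟩
      simpa [div_self hp0.ne'] using lintegral_parabolaAverage_rpow_le hp hF
    · exact exists_lintegral_parabolaAverage_rpow_le_of_lt hs hp hlt hq hpq'
  refine ⟨C ^ (1 / q), by finiteness, fun F hF ↦ ?_⟩
  rw [eLpNorm_eq_lintegral_rpow_enorm_toReal (by simpa) ENNReal.ofReal_ne_top,
    eLpNorm_eq_lintegral_rpow_enorm_toReal (by simpa) ENNReal.ofReal_ne_top,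
    ENNReal.toReal_ofReal hq0.le, ENNReal.toReal_ofReal hp0.le]
  simp only [enorm_eq_self]
  calc (∫⁻ y, parabolaAverage s F y ^ q) ^ (1 / q)
      ≤ (C * (∫⁻ y, F y ^ p) ^ (q / p)) ^ (1 / q) := by
        gcongr
        exact h_bound F hF
    _ = C ^ (1 / q) * (∫⁻ y, F y ^ p) ^ (1 / p) := by
      rw [ENNReal.mul_rpow_of_nonneg _ _ (by positivity), ← ENNReal.rpow_mul,
        div_mul_div_comm, mul_one, mul_comm p q, div_mul_cancel_left₀ hq0.ne', one_div p]

end ParabolaAverage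

lemma enorm_maxOpParabola_le {η : ℝ → ℝ} {B : NNReal} (hB : ∀ x, ‖η x‖ₑ ≤ B) {R : ℝ}
    (hR : Function.support η ⊆ Icc (-R) R) (f : ℝ × ℝ → ℝ) (y : ℝ × ℝ) :
    ‖maxOpParabola η f y‖ₑ ≤ B * parabolaAverage (Icc (-(2 * R)) (2 * R)) (‖f ·‖ₑ) y := by
  refine (enorm_iSup_abs_le _).trans (iSup_le fun ⟨t, ht1, ht2⟩ ↦ ?_)
  have ht0 : t ≠ 0 := by linarith
  set g : ℝ → ℝ≥0∞ := (Icc (-(2 * R)) (2 * R)).indicator fun u ↦ ‖f (y - (u, u ^ 2))‖ₑ with hg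
  have h_integrand (x : ℝ) : ‖f (y.1 - t * x, y.2 - t ^ 2 * x ^ 2) * η x‖ₑ ≤ g (t * x) * B := by
    by_cases hx : η x = 0
    · simp [hx]
    · have hxR := hR hx
      have h_mem : t * x ∈ Icc (-(2 * R)) (2 * R) := by
        constructor <;> nlinarith [hxR.1, hxR.2]
      rw [hg, indicator_of_mem h_mem, enorm_mul, ← mul_pow]
      exact mul_le_mul_right (hB x) _
  calc ‖∫ x, f (y.1 - t * x, y.2 - t ^ 2 * x ^ 2) * η x‖ₑ
      ≤ ∫⁻ x, ‖f (y.1 - t * x, y.2 - t ^ 2 * x ^ 2) * η x‖ₑ := enorm_integral_le_lintegral_enorm _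
    _ ≤ ∫⁻ x, g (t * x) * B := lintegral_mono h_integrand
    _ = ‖t‖ₑ⁻¹ * (∫⁻ x, g x * B) := lintegral_comp_mul_left ht0 fun u ↦ g u * B
    _ ≤ B * ∫⁻ x, g x := by
      have ht : ‖t‖ₑ⁻¹ ≤ 1 := by
        rwa [ENNReal.inv_le_one, Real.enorm_eq_ofReal (by linarith), ENNReal.one_le_ofReal]
      rw [lintegral_mul_const' _ _ ENNReal.coe_ne_top, mul_comm _ (B : ℝ≥0∞)]
      exact mul_le_of_le_one_left' ht
    _ = B * parabolaAverage (Icc (-(2 * R)) (2 * R)) (‖f ·‖ₑ) y := by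
      rw [hg, lintegral_indicator measurableSet_Icc]
      rfl

theorem parabola_maximal_Lp_Lq_general
    (p q : ℝ) (hp : 1 < p)
    (hpq₁ : 1 / (2 * p) ≤ 1 / q) (hpq₂ : 1 / q ≤ 1 / p) (hpq₃ : 2 / p - 1 < 1 / q)
    (η : ℝ → ℝ) (hη : Continuous η) (hη_supp : HasCompactSupport η) :
    ∃ C > 0, ∀ f : ℝ × ℝ → ℝ, Measurable f →
      eLpNorm (maxOpParabola η f) (ENNReal.ofReal q) volume ≤
        ENNReal.ofReal C * eLpNorm f (ENNReal.ofReal p) volume := by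
  have hp0 : 0 < p := by linarith
  have hq0 : 0 < q := one_div_pos.1 ((by positivity : 0 < 1 / (2 * p)).trans_le hpq₁)
  obtain ⟨B, hB⟩ := hη_supp.exists_bound_of_continuous hη
  obtain ⟨R, hR⟩ := hη_supp.isCompact.isBounded.subset_closedBall 0
  rw [Real.closedBall_eq_Icc, zero_sub, zero_add] at hR
  obtain ⟨A, hA, h_avg⟩ := exists_eLpNorm_parabolaAverage_le
    (s := Icc (-(2 * R)) (2 * R)) (by simp) hp ((one_div_le_one_div hq0 hp0).1 hpq₂)
    ((one_div_le_one_div (by positivity) hq0).1 hpq₁) hpq₃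
  have hBA : ENNReal.ofReal B * A ≠ ∞ := by finiteness
  refine ⟨(ENNReal.ofReal B * A).toReal + 1, by positivity, fun f hf ↦ ?_⟩
  calc eLpNorm (maxOpParabola η f) (ENNReal.ofReal q) volume
      ≤ ENNReal.ofReal B * eLpNorm (parabolaAverage (Icc (-(2 * R)) (2 * R)) (‖f ·‖ₑ))
          (ENNReal.ofReal q) volume :=
        eLpNorm_le_mul_eLpNorm_of_ae_le_mul' (.of_forall fun y ↦ enorm_maxOpParabola_le
          (fun x ↦ (ofReal_norm (η x)).symm.trans_le (ENNReal.ofReal_le_ofReal (hB x)))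
          ((subset_tsupport η).trans hR) f y) _
    _ ≤ ENNReal.ofReal B * (A * eLpNorm (‖f ·‖ₑ) (ENNReal.ofReal p) volume) := by
      gcongr
      exact h_avg _ (by fun_prop)
    _ ≤ ENNReal.ofReal ((ENNReal.ofReal B * A).toReal + 1) *
          eLpNorm f (ENNReal.ofReal p) volume := by
      rw [eLpNorm_enorm, ← mul_assoc]
      gcongr
      exact (ENNReal.le_ofReal_iff_toReal_le hBA (by positivity)).2 (by linarith)

/-- **`L^p → L^q` bounds for the parabola through the origin.**  Let `1 < p, q < ∞` satisfy
`1/(2p) < 1/q ≤ 1/p` and `1/q > 2/p − 1`.  Then for every smooth cutoff `η` supported in a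
sufficiently small neighborhood of the origin there is a constant `C = C(p,q,η)` with
`‖M_{P₂} f‖_{L^q(ℝ²)} ≤ C ‖f‖_{L^p(ℝ²)}` for all `f ∈ C₀^∞(ℝ²)`. -/
theorem parabola_maximal_Lp_Lq
    (p q : ℝ) (hp : 1 < p) (hq : 1 < q)
    (hpq₁ : 1 / (2 * p) < 1 / q) (hpq₂ : 1 / q ≤ 1 / p) (hpq₃ : 2 / p - 1 < 1 / q) :
    ∃ ε₀ > 0, ∀ η : ℝ → ℝ, ContDiff ℝ (⊤ : ℕ∞) η → HasCompactSupport η →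
      tsupport η ⊆ Set.Icc (-ε₀) ε₀ →
      ∃ C > 0, ∀ f : ℝ × ℝ → ℝ, ContDiff ℝ (⊤ : ℕ∞) f → HasCompactSupport f →
        eLpNorm (maxOpParabola η f) (ENNReal.ofReal q) volume ≤
          ENNReal.ofReal C * eLpNorm f (ENNReal.ofReal p) volume := by
  refine ⟨1, one_pos, fun η hη hη_supp _ ↦ ?_⟩
  obtain ⟨C, hC, h_bound⟩ := parabola_maximal_Lp_Lq_general p q hp hpq₁.le hpq₂ hpq₃ η
    hη.continuous hη_supp
  exact ⟨C, hC, fun f hf _ ↦ h_bound f hf.continuous.measurable⟩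
end
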